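/- Let Λ = KQ/⟨all paths of length L+1⟩ be a truncated path algebra over an algebraically closed field whose quiver Q has no oriented cycles, and let d be a dimension vector. Let S be a d-dimensional semisimple sequence and S* the generic socle layering of the modules in Rep S. Then the closure of Rep S is an irreducible component of Rep_d(Λ) if and only if (S, S*) is a minimal element of the set {(Ŝ, Ŝ*) : Ŝ ∈ Seq(d) is realizable and Ŝ* is the generic socle layering of Rep Ŝ}, ordered componentwise by dominance. Moreover, the situation is symmetric in S and S*: whenever (S, S*) is a minimal element of the image of Θ, then S* is the generic socle layering of Rep S, and S is the generic radical layering of the modules with socle layering S*. -/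

import Mathlib

open Finset

/-! # Varieties of representations of a quiver with relations: basic setup -/

/-- The Zariski topology on the affine space `ι → K`: it is generated by the basic open
sets `D(p) = {x | p(x) ≠ 0}`, where `p` ranges over multivariate polynomials. -/
def zariskiTopology (ι K : Type) [CommSemiring K] : TopologicalSpace (ι → K) :=
  TopologicalSpace.generateFrom
    {U | ∃ p : MvPolynomial ι K, U = {x | MvPolynomial.eval x p ≠ 0}}

/-- A finite quiver `Q`: vertices `Fin n`, arrows `Fin numArrows` with source and
target maps. -/
structure QuiverData where
  n : ℕ
  numArrows : ℕ
  src : Fin numArrows → Fin n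
  tgt : Fin numArrows → Fin n

namespace QuiverData

variable (Q : QuiverData) (d : Fin Q.n → ℕ) (K : Type) [Field K]

/-- Index of the coordinates of the affine space of `d`-dimensional representations:
for each arrow `a` a matrix entry index in `Fin (d (tgt a)) × Fin (d (src a))`. -/
abbrev Coords := Σ a : Fin Q.numArrows, Fin (d (Q.tgt a)) × Fin (d (Q.src a))

/-- The affine space of `d`-dimensional representations of `Q`:
a point `x` assigns to each arrow `a` a `d (tgt a) × d (src a)` matrix over `K`. -/
abbrev RepSpace := Coords Q d → K

/-- `RepSpace` carries the Zariski topology. -/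
noncomputable instance instRepTop : TopologicalSpace (RepSpace Q d K) :=
  zariskiTopology (Coords Q d) K

/-- The underlying `K`-vector space `⊕ᵢ K^{dᵢ}` of any `d`-dimensional representation. -/
abbrev Carrier := (Σ i : Fin Q.n, Fin (d i)) → K

/-- The projection onto the component of the `i`-th vertex (action of the primitive
idempotent `eᵢ`). -/
def proj (i : Fin Q.n) : Carrier Q d K →ₗ[K] Carrier Q d K where
  toFun m := fun jv => if jv.1 = i then m jv else 0
  map_add' u v := by
    funext jv; by_cases h : jv.1 = i <;> simp [h]
  map_smul' c u := by
    funext jv; by_cases h : jv.1 = i <;> simp [h]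

/-- The action of the arrow `a` on the carrier space of the representation `x`. -/
noncomputable def arrowMap (x : RepSpace Q d K) (a : Fin Q.numArrows) :
    Carrier Q d K →ₗ[K] Carrier Q d K where
  toFun m := fun jv =>
    if h : jv.1 = Q.tgt a then
      ∑ w : Fin (d (Q.src a)), x ⟨a, (Fin.cast (congrArg d h) jv.2, w)⟩ * m ⟨Q.src a, w⟩
    else 0
  map_add' u v := by
    funext jv
    by_cases h : jv.1 = Q.tgt a <;> simp [h, mul_add, Finset.sum_add_distrib]
  map_smul' c u := by
    funext jv
    by_cases h : jv.1 = Q.tgt a <;>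
      simp [h, Finset.mul_sum, mul_comm, mul_left_comm, mul_assoc]

/-- The action of a word `w = [a_k, …, a_1]` of arrows on the representation `x`
(the arrow `a_1` acts first; non-composable words act as `0`). -/
noncomputable def wordMap (x : RepSpace Q d K) (w : List (Fin Q.numArrows)) :
    Module.End K (Carrier Q d K) :=
  (w.map fun a => (arrowMap Q d K x a : Module.End K (Carrier Q d K))).prod

/-- The submodule `J^l · M_x` of the module `M_x`: the sum of the images of all words of
arrows of length `l` (for an admissible ideal, the radical acts through the arrows). -/
noncomputable def radPow (x : RepSpace Q d K) (l : ℕ) : Submodule K (Carrier Q d K) :=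
  ⨆ w : {w : List (Fin Q.numArrows) // w.length = l},
    LinearMap.range (wordMap Q d K x w.1)

/-- The socle series of `M_x`: `socPow x l = soc_l(M_x)`. -/
noncomputable def socPow (x : RepSpace Q d K) : ℕ → Submodule K (Carrier Q d K)
  | 0 => ⨅ a, LinearMap.ker (arrowMap Q d K x a)
  | (l+1) => ⨅ a, (socPow x l).comap (arrowMap Q d K x a)

/-- The dimension, at the vertex `i`, of a (vertex-graded) subspace `N`. -/
noncomputable def vdim (N : Submodule K (Carrier Q d K)) (i : Fin Q.n) : ℕ :=
  Module.finrank K (N.map (proj Q d K i))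

/-- The radical layering `S(M_x) = (M/JM, JM/J²M, …, J^L M/J^{L+1} M)` of the module `M_x`,
recorded through the dimension vectors of its semisimple layers. -/
noncomputable def radLayering (L : ℕ) (x : RepSpace Q d K) :
    Fin (L+1) → Fin Q.n → ℕ :=
  fun l i => vdim Q d K (radPow Q d K x l) i - vdim Q d K (radPow Q d K x (l+1)) i

/-- The socle layering `S*(M_x) = (soc₀M, soc₁M/soc₀M, …)` of the module `M_x`, recorded
through the dimension vectors of its semisimple layers. -/
noncomputable def socLayering (L : ℕ) (x : RepSpace Q d K) :
    Fin (L+1) → Fin Q.n → ℕ :=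
  fun l i => vdim Q d K (socPow Q d K x l) i -
    (if (l : ℕ) = 0 then 0 else vdim Q d K (socPow Q d K x ((l : ℕ) - 1)) i)

end QuiverData

/-- The dominance order on semisimple sequences (recorded as sequences of dimension
vectors): `dominates S S'` means `S ≤ S'`, i.e. `⊕_{j≤l} S_j ⊆ ⊕_{j≤l} S'_j` for all `l`. -/
def dominates {n L : ℕ} (S S' : Fin (L+1) → Fin n → ℕ) : Prop :=
  ∀ (l : Fin (L+1)) (i : Fin n),
    ∑ j ∈ Finset.univ.filter (fun j => j ≤ l), S j i ≤
      ∑ j ∈ Finset.univ.filter (fun j => j ≤ l), S' j i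

/-- A semisimple sequence has dimension vector `d` if its layers' dimension vectors sum
to `d`. -/
def hasDimVec {n L : ℕ} (S : Fin (L+1) → Fin n → ℕ) (d : Fin n → ℕ) : Prop :=
  ∀ i, ∑ l, S l i = d i

namespace QuiverData

variable (Q : QuiverData) (d : Fin Q.n → ℕ) (K : Type) [Field K]

/-- Evaluation of a formal noncommutative polynomial in the vertices (`Sum.inl`) and
arrows (`Sum.inr`) of `Q` on the representation `x`; an element of the path algebra `KQ`
is represented by such a polynomial. -/
noncomputable def evalRel (x : RepSpace Q d K) :
    FreeAlgebra K (Fin Q.n ⊕ Fin Q.numArrows) →ₐ[K] Module.End K (Carrier Q d K) :=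
  FreeAlgebra.lift K
    (Sum.elim (fun i => (proj Q d K i : Module.End K (Carrier Q d K)))
      (fun a => (arrowMap Q d K x a : Module.End K (Carrier Q d K))))

/-- The affine variety `Rep_d(Λ)` for `Λ = KQ/I`, where the ideal `I` is generated by the
set `R` of relations: the set of points of `RepSpace` annihilating every relation. -/
def RepVar (R : Set (FreeAlgebra K (Fin Q.n ⊕ Fin Q.numArrows))) :
    Set (RepSpace Q d K) :=
  {x | ∀ r ∈ R, evalRel Q d K x r = 0}

/-- The affine variety `Rep_d(Λ)` for the truncated path algebra
`Λ = KQ/⟨all paths of length L+1⟩`. -/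
def TruncRepVar (L : ℕ) : Set (RepSpace Q d K) :=
  {x | ∀ w : List (Fin Q.numArrows), w.length = L + 1 → wordMap Q d K x w = 0}

/-- A submodule of `M_x`, i.e. a subspace stable under the arrows and the vertex
idempotents. -/
def Stable (x : RepSpace Q d K) (N : Submodule K (Carrier Q d K)) : Prop :=
  (∀ a, N.map (arrowMap Q d K x a) ≤ N) ∧ ∀ i, N.map (proj Q d K i) ≤ N

/-- A submodule `N` of `M_x` is indecomposable (as a module). -/
def IndecompSub (x : RepSpace Q d K) (N : Submodule K (Carrier Q d K)) : Prop :=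
  N ≠ ⊥ ∧ ∀ N₁ N₂ : Submodule K (Carrier Q d K),
    Stable Q d K x N₁ → Stable Q d K x N₂ → N₁ ≤ N → N₂ ≤ N →
    N₁ ⊔ N₂ = N → N₁ ⊓ N₂ = ⊥ → N₁ = ⊥ ∨ N₂ = ⊥

/-- The module `M_x` is indecomposable. -/
def IndecompRep (x : RepSpace Q d K) : Prop :=
  IndecompSub Q d K x ⊤

/-- The module `M_x` is uniserial: its submodules form a chain. -/
def UniserialRep (x : RepSpace Q d K) : Prop :=
  ∀ N₁ N₂ : Submodule K (Carrier Q d K),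
    Stable Q d K x N₁ → Stable Q d K x N₂ → N₁ ≤ N₂ ∨ N₂ ≤ N₁

/-- `M_x` decomposes as a direct sum of `s` indecomposable submodules whose dimension
vectors are `D 0, …, D (s-1)`. -/
def DecompWith (x : RepSpace Q d K) (s : ℕ) (D : Fin s → Fin Q.n → ℕ) : Prop :=
  ∃ N : Fin s → Submodule K (Carrier Q d K),
    (∀ r, Stable Q d K x (N r)) ∧
    (∀ r, Disjoint (N r) (⨆ t, ⨆ (_ : t ≠ r), N t)) ∧
    (⨆ r, N r) = ⊤ ∧
    (∀ r, IndecompSub Q d K x (N r)) ∧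
    ∀ r i, vdim Q d K (N r) i = D r i

/-- A homomorphism of representations `M_x → M_y` (for possibly different dimension
vectors): a linear map commuting with the arrow actions and the vertex projections. -/
def RepHom (dx dy : Fin Q.n → ℕ) (x : RepSpace Q dx K) (y : RepSpace Q dy K)
    (φ : Carrier Q dx K →ₗ[K] Carrier Q dy K) : Prop :=
  (∀ a, φ ∘ₗ arrowMap Q dx K x a = arrowMap Q dy K y a ∘ₗ φ) ∧
  ∀ i, φ ∘ₗ proj Q dx K i = proj Q dy K i ∘ₗ φ

/-- The submodule `N` of `M_x` is isomorphic, as a representation, to `M_y`. -/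
def SubrepIso (dy : Fin Q.n → ℕ) (x : RepSpace Q d K)
    (N : Submodule K (Carrier Q d K)) (y : RepSpace Q dy K) : Prop :=
  ∃ φ : Carrier Q d K →ₗ[K] Carrier Q dy K,
    N ⊓ LinearMap.ker φ = ⊥ ∧ N.map φ = ⊤ ∧
    (∀ a, ∀ m ∈ N, φ (arrowMap Q d K x a m) = arrowMap Q dy K y a (φ m)) ∧
    (∀ i, ∀ m ∈ N, φ (proj Q d K i m) = proj Q dy K i (φ m))

/-- The representations `M_x` and `M_y` are isomorphic; the isomorphism classes are
exactly the orbits of the `GL(d)`-action. -/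
def IsoRep (x y : RepSpace Q d K) : Prop :=
  ∃ φ : Carrier Q d K ≃ₗ[K] Carrier Q d K,
    (∀ a m, φ (arrowMap Q d K x a m) = arrowMap Q d K y a (φ m)) ∧
    ∀ i m, φ (proj Q d K i m) = proj Q d K i (φ m)

/-- The `GL(d)`-orbit of the point `x`, i.e. the set of points encoding modules
isomorphic to `M_x`. -/
def orbitSet (x : RepSpace Q d K) : Set (RepSpace Q d K) :=
  {y | IsoRep Q d K x y}

/-- Given a family `P` of varieties `Rep_dv(Λ)` (one for every dimension vector `dv`),
`Ext¹_Λ(M_x, M_y) = 0`: every extension `0 → M_y → E → M_x → 0` of `Λ`-modules splits. -/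
def Ext1Zero (P : ∀ dv : Fin Q.n → ℕ, Set (RepSpace Q dv K))
    (dx dy : Fin Q.n → ℕ) (x : RepSpace Q dx K) (y : RepSpace Q dy K) : Prop :=
  ∀ z ∈ P (fun i => dx i + dy i),
    ∀ (ι : Carrier Q dy K →ₗ[K] Carrier Q (fun i => dx i + dy i) K)
      (π : Carrier Q (fun i => dx i + dy i) K →ₗ[K] Carrier Q dx K),
      RepHom Q K dy (fun i => dx i + dy i) y z ι →
      RepHom Q K (fun i => dx i + dy i) dx z x π →
      Function.Injective ι → Function.Surjective π →
      LinearMap.ker π = LinearMap.range ι →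
      ∃ σ : Carrier Q dx K →ₗ[K] Carrier Q (fun i => dx i + dy i) K,
        RepHom Q K dx (fun i => dx i + dy i) x z σ ∧ π ∘ₗ σ = LinearMap.id

/-- The direct sum `C₁ ⊕ ⋯ ⊕ C_s` of subvarieties `C_r ⊆ Rep_{D r}(Λ)`: the set of
points `x ∈ Rep_d(Λ)` whose module decomposes as `M_x ≅ ⊕_r M^{(r)}` with `M^{(r)}`
encoded by a point of `C_r`. -/
def DirectSumSet (s : ℕ) (D : Fin s → Fin Q.n → ℕ)
    (Cs : ∀ r : Fin s, Set (RepSpace Q (D r) K)) : Set (RepSpace Q d K) :=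
  {x | ∃ N : Fin s → Submodule K (Carrier Q d K),
    (∀ r, Stable Q d K x (N r)) ∧
    (∀ r, Disjoint (N r) (⨆ t, ⨆ (_ : t ≠ r), N t)) ∧
    (⨆ r, N r) = ⊤ ∧
    ∀ r, ∃ y ∈ Cs r, SubrepIso Q d K (D r) x (N r) y}

/-- The endomorphism space `End_Λ(M_x)` of the module `M_x`. -/
def endSpace (x : RepSpace Q d K) :
    Submodule K (Carrier Q d K →ₗ[K] Carrier Q d K) where
  carrier := {φ | RepHom Q K d d x x φ}
  add_mem' := by
    intro φ ψ hφ hψ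
    exact ⟨fun a => by rw [LinearMap.add_comp, LinearMap.comp_add, hφ.1 a, hψ.1 a],
      fun i => by rw [LinearMap.add_comp, LinearMap.comp_add, hφ.2 i, hψ.2 i]⟩
  zero_mem' := by
    exact ⟨fun a => by simp, fun i => by simp⟩
  smul_mem' := by
    intro c φ hφ
    exact ⟨fun a => by rw [LinearMap.smul_comp, LinearMap.comp_smul, hφ.1 a],
      fun i => by rw [LinearMap.smul_comp, LinearMap.comp_smul, hφ.2 i]⟩

/-- A word of arrows is a (composable) path when read in function-composition order. -/
def IsPathWord (w : List (Fin Q.numArrows)) : Prop :=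
  List.Chain' (fun a b => Q.src a = Q.tgt b) w

/-- The quiver `Q` has no oriented cycles. -/
def Acyclic : Prop :=
  ∀ (a : Fin Q.numArrows) (w : List (Fin Q.numArrows)),
    IsPathWord Q (a :: w) →
      Q.tgt a ≠ Q.src ((a :: w).getLast (List.cons_ne_nil a w))

/-- A filtration `M_x = F 0 ⊇ F 1 ⊇ ⋯ ⊇ F (L+1) = 0` by submodules which is governed by
the semisimple sequence `S`: each layer `F l / F (l+1)` is semisimple, isomorphic to `S l`. -/
def Governed (L : ℕ) (x : RepSpace Q d K) (S : Fin (L+1) → Fin Q.n → ℕ)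
    (F : Fin (L+2) → Submodule K (Carrier Q d K)) : Prop :=
  F 0 = ⊤ ∧ F (Fin.last (L+1)) = ⊥ ∧
  (∀ l : Fin (L+1), F l.succ ≤ F l.castSucc) ∧
  (∀ (l : Fin (L+2)) (i : Fin Q.n), (F l).map (proj Q d K i) ≤ F l) ∧
  (∀ (l : Fin (L+1)) (a : Fin Q.numArrows),
      (F l.castSucc).map (arrowMap Q d K x a) ≤ F l.succ) ∧
  ∀ (l : Fin (L+1)) (i : Fin Q.n),
      vdim Q d K (F l.castSucc) i = S l i + vdim Q d K (F l.succ) i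

/-- `Filt S`: the set of points whose module has a filtration governed by `S`. -/
def FiltSet (L : ℕ) (S : Fin (L+1) → Fin Q.n → ℕ) : Set (RepSpace Q d K) :=
  {x | ∃ F, Governed Q d K L x S F}

/-- `Γ(M_x)`: the number of semisimple sequences which are realizable (i.e. occur as the
radical layering of a module in the variety `P`) and which govern some filtration of `M_x`. -/
noncomputable def gammaCount (L : ℕ) (P : Set (RepSpace Q d K))
    (x : RepSpace Q d K) : ℕ :=
  Set.ncard {S : Fin (L+1) → Fin Q.n → ℕ |
    (∃ y ∈ P, radLayering Q d K L y = S) ∧ ∃ F, Governed Q d K L x S F}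

/-- `Sstar` is the generic (= minimal, attained) socle layering of the modules in `W`. -/
def GenSoc (L : ℕ) (W : Set (RepSpace Q d K))
    (Sstar : Fin (L+1) → Fin Q.n → ℕ) : Prop :=
  (∀ x ∈ W, dominates Sstar (socLayering Q d K L x)) ∧
  ∃ x ∈ W, socLayering Q d K L x = Sstar

end QuiverData

namespace QuiverData

variable (Q : QuiverData)

/-- The `i`-th entry of the row vector `e·A` (over `ℤ`), where `A` is the adjacency
matrix of `Q`: the sum of `e (src a)` over all arrows `a` ending at `i`. -/
def inflowZ (e : Fin Q.n → ℤ) (i : Fin Q.n) : ℤ :=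
  ∑ a ∈ Finset.univ.filter (fun a => Q.tgt a = i), e (Q.src a)

/-- The `i`-th entry of the row vector `e·B` (over `ℤ`), where `B` is the transpose of
the adjacency matrix of `Q`. -/
def outflowZ (e : Fin Q.n → ℤ) (i : Fin Q.n) : ℤ :=
  ∑ a ∈ Finset.univ.filter (fun a => Q.src a = i), e (Q.tgt a)

/-- Partial sums `t⁽⁰⁾ + ⋯ + t⁽ˡ⁾` of the recursion
`t⁽⁰⁾ = sup{0, d − d·A}`, `t⁽ˡ⁺¹⁾ = sup{0, (d − ∑_{k≤l} t⁽ᵏ⁾) − (d − ∑_{k≤l} t⁽ᵏ⁾)·A}`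
(computed componentwise). -/
def cumLayer (dz : Fin Q.n → ℤ) : ℕ → Fin Q.n → ℤ
  | 0 => fun i => max 0 (dz i - inflowZ Q dz i)
  | (l+1) => fun i =>
      cumLayer dz l i +
        max 0 ((dz i - cumLayer dz l i) -
          inflowZ Q (fun j => dz j - cumLayer dz l j) i)

/-- The positive part `∑ᵢ eᵢ fᵢ` of the Euler form of `Q`. -/
def eulerHomPart (e f : Fin Q.n → ℕ) : ℕ := ∑ i, e i * f i

/-- The negative part `∑_{α} e_{src α} f_{tgt α}` of the Euler form of `Q`, so that
`⟨e, f⟩ = eulerHomPart e f − eulerExtPart e f`. -/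
def eulerExtPart (e f : Fin Q.n → ℕ) : ℕ :=
  ∑ a, e (Q.src a) * f (Q.tgt a)

end QuiverData

/-- The quiver with a single vertex and `r` loops. -/
def QuiverData.loopQuiver (r : ℕ) : QuiverData :=
  ⟨1, r, fun _ => 0, fun _ => 0⟩

namespace QuiverData

variable (Q : QuiverData) (d : Fin Q.n → ℕ) (K : Type) [Field K]

/-- The variety `Rep_d(Λ)` for `Λ = KQ/⟨Rels⟩`, regarded as a topological space with the
(subspace) Zariski topology. -/
abbrev GenV (Rels : Set (FreeAlgebra K (Fin Q.n ⊕ Fin Q.numArrows))) :=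
  {y : RepSpace Q d K // y ∈ RepVar Q d K Rels}

/-- The variety `Rep_d(Λ)` for the truncated path algebra
`Λ = KQ/⟨paths of length L+1⟩`, regarded as a topological space. -/
abbrev TruncV (L : ℕ) := {y : RepSpace Q d K // y ∈ TruncRepVar Q d K L}

end QuiverData

/-!
Flags of subspaces with equal dimension vectors are conjugate, so two points of `Rep S` can be
joined by a rational curve that lies generically in `Rep S`; hence `Rep S` is irreducible. The
dimensions of `J^l M` are lower semicontinuous and, dually, those of `soc_l M` are upper
semicontinuous. As there are finitely many radical layerings, every irreducible subset of
`Rep_d(Λ)` lies in the closure of a single `Rep S`, and minimality of `(S, S*)` then forces this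
closure to be a component.

Conversely, suppose that `M_z` has the same or larger radicals and the same or smaller socles than
`M_x`, and a different radical layering. Let `i` be a lowest vertex, and `k + 1` the last index, at
which the dimensions of the radicals differ. Counting dimensions yields a linear relation among
elements of `J^k M_x`, not all in `J^{k+1} M_x`, that are sent to the vertex `i` by the arrows
ending there. The socle condition provides some `m ∈ soc_{L-k} M_x` with `m_i ∉ J^{k+1} M_x`, and
perturbing one of the arrows by a rank-one map with value `m_i` destroys the relation: it enlarges
`J^{k+1} M_x` at `i`, while acyclicity ensures `J^{L+1} = 0`. So `x` lies in the closure of points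
whose radical dimensions are not bounded by those of `x`. If this applies to every point of
`Rep S`, the closure of `Rep S` is not a component.
-/

open Filter Topology

section FunctionAlgebras

variable {X n K : Type*} [Field K] (A : Subalgebra K (X → K))

theorem sum_apply_mem {α : Type*} (s : Finset α) {f : α → X → K} (h : ∀ a ∈ s, f a ∈ A) :
    (fun x ↦ ∑ a ∈ s, f a x) ∈ A := by
  simpa only [← Finset.sum_apply] using A.sum_mem h

theorem prod_apply_mem {α : Type*} (s : Finset α) {f : α → X → K} (h : ∀ a ∈ s, f a ∈ A) :
    (fun x ↦ ∏ a ∈ s, f a x) ∈ A := by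
  simpa only [← Finset.prod_apply] using A.prod_mem h

theorem mvPolynomial_eval_mem {ι : Type*} {c : X → ι → K} (hc : ∀ k, (fun x ↦ c x k) ∈ A)
    (p : MvPolynomial ι K) : (fun x ↦ MvPolynomial.eval (c x) p) ∈ A := by
  induction p using MvPolynomial.induction_on with
  | C a => simp only [MvPolynomial.eval_C]; exact A.algebraMap_mem a
  | add p q hp hq => simp only [map_add]; exact A.add_mem hp hq
  | mul_X p k hp => simp only [map_mul, MvPolynomial.eval_X]; exact A.mul_mem hp (hc k)

theorem linearMap_apply_mem {σ : Type*} [Finite σ] {V : X → σ → K}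
    (hV : ∀ s, (fun x ↦ V x s) ∈ A) (g : (σ → K) →ₗ[K] K) : (fun x ↦ g (V x)) ∈ A := by
  have := Fintype.ofFinite σ
  classical
  have hsum (x : X) : g (V x) = ∑ s, V x s * g (fun j ↦ if s = j then 1 else 0) :=
    g.pi_apply_eq_sum_univ (V x)
  simp only [hsum]
  exact sum_apply_mem A univ fun s _ ↦ A.mul_mem (hV s) (A.algebraMap_mem _)

variable [Fintype n]

theorem matrix_mul_apply_mem {M N : X → Matrix n n K} (hM : ∀ i j, (fun x ↦ M x i j) ∈ A)
    (hN : ∀ i j, (fun x ↦ N x i j) ∈ A) (i j : n) : (fun x ↦ (M x * N x) i j) ∈ A := by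
  simp only [Matrix.mul_apply]
  exact sum_apply_mem A univ fun k _ ↦ A.mul_mem (hM i k) (hN k j)

variable [DecidableEq n]

theorem matrix_det_mem {M : X → Matrix n n K} (h : ∀ i j, (fun x ↦ M x i j) ∈ A) :
    (fun x ↦ (M x).det) ∈ A := by
  simp only [Matrix.det_apply']
  exact sum_apply_mem A univ fun σ _ ↦
    A.mul_mem (A.algebraMap_mem _) (prod_apply_mem A univ fun i _ ↦ h (σ i) i)

theorem matrix_inv_apply_mem {M : X → Matrix n n K} (h : ∀ i j, (fun x ↦ M x i j) ∈ A)
    (hdet : (fun x ↦ (M x).det⁻¹) ∈ A) (i j : n) : (fun x ↦ (M x)⁻¹ i j) ∈ A := by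
  simp only [Matrix.inv_def, Ring.inverse_eq_inv', Matrix.smul_apply, smul_eq_mul]
  refine A.mul_mem hdet ?_
  simp only [Matrix.adjugate_apply]
  refine matrix_det_mem A fun p q ↦ ?_
  obtain rfl | hp := eq_or_ne p j
  · simp only [Matrix.updateRow_self]
    exact A.algebraMap_mem _
  · simpa only [Matrix.updateRow_ne hp] using h p q

end FunctionAlgebras

section RegularAt

variable {K : Type*} [Field K]

/-- The local ring of the affine line at `t₀`: the functions of one variable that are quotients of
polynomials with denominator nonzero at `t₀`. They are encoded as honest functions `K → K`, whose
values at the zeros of the denominator are unconstrained. -/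
def regularAt (t₀ : K) : Subalgebra K (K → K) where
  carrier := {f | ∃ p q : Polynomial K, q.eval t₀ ≠ 0 ∧ ∀ t, q.eval t * f t = p.eval t}
  mul_mem' := by
    rintro f g ⟨p₁, q₁, h₁, e₁⟩ ⟨p₂, q₂, h₂, e₂⟩
    refine ⟨p₁ * p₂, q₁ * q₂, by simpa using ⟨h₁, h₂⟩, fun t ↦ ?_⟩
    simp only [Polynomial.eval_mul, Pi.mul_apply, ← e₁, ← e₂]
    ring
  add_mem' := by
    rintro f g ⟨p₁, q₁, h₁, e₁⟩ ⟨p₂, q₂, h₂, e₂⟩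
    refine ⟨p₁ * q₂ + q₁ * p₂, q₁ * q₂, by simpa using ⟨h₁, h₂⟩, fun t ↦ ?_⟩
    simp only [Polynomial.eval_mul, Polynomial.eval_add, Pi.add_apply, ← e₁, ← e₂]
    ring
  algebraMap_mem' c := ⟨.C c, 1, by simp, fun t ↦ by simp⟩

variable {t₀ : K} {f : K → K}

theorem id_mem_regularAt : (fun t ↦ t) ∈ regularAt t₀ :=
  ⟨.X, 1, by simp, fun t ↦ by simp⟩

theorem inv_mem_regularAt (hf : f ∈ regularAt t₀) (h₀ : f t₀ ≠ 0) :
    (fun t ↦ (f t)⁻¹) ∈ regularAt t₀ := by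
  obtain ⟨p, q, hq, e⟩ := hf
  have hp : p.eval t₀ ≠ 0 := e t₀ ▸ mul_ne_zero hq h₀
  refine ⟨p * q, p * p, by simpa using hp, fun t ↦ ?_⟩
  simp only [Polynomial.eval_mul, ← e]
  by_cases h : f t = 0
  · simp [h]
  · field_simp

theorem eventually_ne_zero_of_mem_regularAt (hf : f ∈ regularAt t₀) (h₀ : f t₀ ≠ 0) :
    ∀ᶠ t in cofinite, f t ≠ 0 := by
  obtain ⟨p, q, hq, e⟩ := hf
  have hp : p ≠ 0 := by
    rintro rfl
    exact mul_ne_zero hq h₀ (by simpa using e t₀)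
  refine (Polynomial.finite_setOfPred_isRoot hp).subset fun t ht ↦ ?_
  have ht : f t = 0 := not_not.1 ht
  change p.eval t = 0
  rw [← e, ht, mul_zero]

end RegularAt

section Zariski

variable {ι κ K : Type} [Field K]

/-- The polynomial functions on the affine space `ι → K`, as functions rather than formal
polynomials: their zero sets are the Zariski closed sets. -/
noncomputable def polyFunctions (ι K : Type) [Field K] : Subalgebra K ((ι → K) → K) :=
  (AlgHom.pi (R := K) fun x : ι → K ↦ MvPolynomial.aeval x).range

theorem mem_polyFunctions {f : (ι → K) → K} :
    f ∈ polyFunctions ι K ↔ ∃ p : MvPolynomial ι K, ∀ x, MvPolynomial.eval x p = f x :=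
  exists_congr fun _ ↦ funext_iff

theorem coord_mem_polyFunctions (k : ι) : (fun x : ι → K ↦ x k) ∈ polyFunctions ι K :=
  mem_polyFunctions.2 ⟨.X k, fun _ ↦ MvPolynomial.eval_X k⟩

theorem isOpen_ne_zero_of_mem_polyFunctions {f : (ι → K) → K} (hf : f ∈ polyFunctions ι K) :
    IsOpen[zariskiTopology ι K] {x | f x ≠ 0} := by
  obtain ⟨p, hp⟩ := mem_polyFunctions.1 hf
  exact TopologicalSpace.isOpen_generateFrom_of_mem ⟨p, by simp only [hp]⟩

theorem continuous_zariski_of_mem_polyFunctions {F : (ι → K) → κ → K}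
    (hF : ∀ k, (fun x ↦ F x k) ∈ polyFunctions ι K) :
    Continuous[zariskiTopology ι K, zariskiTopology κ K] F := by
  refine continuous_generateFrom_iff.2 ?_
  rintro _ ⟨p, rfl⟩
  exact isOpen_ne_zero_of_mem_polyFunctions (mvPolynomial_eval_mem _ hF p)

theorem eventually_mem_of_mem_regularAt {t₀ : K} {c : K → ι → K}
    (hc : ∀ k, (fun t ↦ c t k) ∈ regularAt t₀) {U : Set (ι → K)}
    (hU : IsOpen[zariskiTopology ι K] U) (h₀ : c t₀ ∈ U) : ∀ᶠ t in cofinite, c t ∈ U := by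
  induction hU with
  | basic s hs =>
    obtain ⟨p, rfl⟩ := hs
    exact eventually_ne_zero_of_mem_regularAt (mvPolynomial_eval_mem _ hc p) h₀
  | univ => exact .of_forall fun _ ↦ trivial
  | inter s t _ _ ihs iht => exact (ihs h₀.1).and (iht h₀.2)
  | sUnion S _ ih =>
    obtain ⟨s, hs, h₀⟩ := h₀
    exact (ih s hs h₀).mono fun t ht ↦ ⟨s, hs, ht⟩

theorem exists_isOpen_linearIndependent {σ : Type} [Finite σ] {m : ℕ}
    {V : (ι → K) → Fin m → σ → K} (hV : ∀ j s, (fun y ↦ V y j s) ∈ polyFunctions ι K)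
    {x : ι → K} (hx : LinearIndependent K (V x)) :
    ∃ U, IsOpen[zariskiTopology ι K] U ∧ x ∈ U ∧ ∀ y ∈ U, LinearIndependent K (V y) := by
  obtain ⟨g, hg⟩ : ∃ g : (σ → K) →ₗ[K] Fin m → K, ∀ j, g (V x j) = Pi.single j 1 := by
    obtain ⟨g, hg⟩ := (Fintype.linearCombination K (V x)).exists_leftInverse_of_injective
      (LinearMap.ker_eq_bot.2 (linearIndependent_iff_injective_fintypeLinearCombination.1 hx))
    exact ⟨g, fun j ↦ by simpa using LinearMap.congr_fun hg (Pi.single j 1)⟩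
  let M (y : ι → K) : Matrix (Fin m) (Fin m) K := fun j ↦ g (V y j)
  have hM : M x = 1 := by
    ext i j
    exact (congr_fun (hg i) j).trans (Matrix.one_eq_pi_single.trans (by rw [Pi.single_comm])).symm
  refine ⟨{y | (M y).det ≠ 0}, ?_, by simp [hM], fun y hy ↦ ?_⟩
  · exact isOpen_ne_zero_of_mem_polyFunctions <| matrix_det_mem _ fun i j ↦
      linearMap_apply_mem _ (hV i) (LinearMap.proj j ∘ₗ g)
  · exact .of_comp g (Matrix.linearIndependent_rows_of_det_ne_zero hy)

end Zariski

section LinearAlgebra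

open Module

variable {K V : Type*} [Field K] [AddCommGroup V] [Module K V]

theorem exists_linearEquiv_map_eq [FiniteDimensional K V] {A B : Submodule K V}
    (h : finrank K A = finrank K B) : ∃ g : V ≃ₗ[K] V, A.map (g : V →ₗ[K] V) = B := by
  obtain ⟨g, hg⟩ := Submodule.exists_linearEquiv_restrict_eq (LinearEquiv.ofFinrankEq A B h)
  refine ⟨g, Submodule.eq_of_le_of_finrank_le ?_ (by rw [LinearEquiv.finrank_map_eq, h])⟩
  rintro _ ⟨v, hv, rfl⟩
  exact hg ⟨v, hv⟩ ▸ Subtype.property _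

theorem exists_linearEquiv_map_eq_of_antitone (N : ℕ) [FiniteDimensional K V]
    {F G : ℕ → Submodule K V} (hF : Antitone F) (hG : Antitone G)
    (h : ∀ l, finrank K (F l) = finrank K (G l)) :
    ∃ g : V ≃ₗ[K] V, ∀ l < N, (F l).map (g : V →ₗ[K] V) = G l := by
  induction N generalizing V with
  | zero => exact ⟨.refl K V, fun _ hl ↦ absurd hl (Nat.not_lt_zero _)⟩
  | succ N ih =>
    obtain ⟨k, hk⟩ := exists_linearEquiv_map_eq (h 0)
    have hkF (l : ℕ) : (F (l + 1)).map (k : V →ₗ[K] V) ≤ G 0 :=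
      hk ▸ Submodule.map_mono (hF l.succ.zero_le)
    have hG0 (l : ℕ) : G (l + 1) ≤ G 0 := hG l.succ.zero_le
    obtain ⟨e, he⟩ := ih (V := G 0)
      (F := fun l ↦ ((F (l + 1)).map (k : V →ₗ[K] V)).comap (G 0).subtype)
      (G := fun l ↦ (G (l + 1)).comap (G 0).subtype)
      (fun _ _ hl ↦ Submodule.comap_mono (Submodule.map_mono (hF (Nat.succ_le_succ hl))))
      (fun _ _ hl ↦ Submodule.comap_mono (hG (Nat.succ_le_succ hl)))
      (fun l ↦ by rw [(Submodule.comapSubtypeEquivOfLe (hkF l)).finrank_eq,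
        (Submodule.comapSubtypeEquivOfLe (hG0 l)).finrank_eq, LinearEquiv.finrank_map_eq, h])
    obtain ⟨g, hg⟩ := Submodule.exists_linearEquiv_restrict_eq e
    refine ⟨k.trans g, fun l hl ↦ Submodule.eq_of_le_of_finrank_le ?_
      (by rw [LinearEquiv.finrank_map_eq, h])⟩
    rintro _ ⟨v, hv, rfl⟩
    have hkv : k v ∈ G 0 := hk ▸ Submodule.mem_map_of_mem (hF l.zero_le hv)
    change g (k v) ∈ G l
    rw [← hg ⟨k v, hkv⟩]
    cases l with
    | zero => exact Subtype.property _
    | succ l =>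
      have hmem : (⟨k v, hkv⟩ : G 0) ∈
          ((F (l + 1)).map (k : V →ₗ[K] V)).comap (G 0).subtype := Submodule.mem_map_of_mem hv
      exact (he l (Nat.lt_of_succ_lt_succ hl)).le (Submodule.mem_map_of_mem hmem)

theorem finrank_map_add_finrank_inf_ker [FiniteDimensional K V] {W : Type*} [AddCommGroup W]
    [Module K W] (T : V →ₗ[K] W) (P : Submodule K V) :
    finrank K (P.map T) + finrank K (P ⊓ LinearMap.ker T : Submodule K V) = finrank K P := by
  rw [← LinearMap.finrank_range_add_finrank_ker (T.domRestrict P), LinearMap.range_domRestrict,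
    LinearMap.ker_domRestrict, ← Submodule.finrank_map_subtype_eq, Submodule.map_comap_subtype]

theorem finrank_submodule_pi {ι : Type*} [Fintype ι] [FiniteDimensional K V]
    (N : ι → Submodule K V) :
    finrank K (Submodule.pi Set.univ N) = ∑ a, finrank K (N a) := by
  have e : Submodule.pi Set.univ N ≃ₗ[K] ∀ a, N a :=
    { toFun := fun u a ↦ ⟨u.1 a, u.2 a trivial⟩
      invFun := fun u ↦ ⟨fun a ↦ u a, fun a _ ↦ (u a).2⟩
      map_add' := fun _ _ ↦ rfl
      map_smul' := fun _ _ ↦ rfl }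
  rw [e.finrank_eq, finrank_pi_fintype]

theorem finrank_add_finrank_of_mem_iff_dotProduct {ι : Type*} [Fintype ι]
    {R S : Submodule K (ι → K)} (h : ∀ v, v ∈ S ↔ ∀ u ∈ R, u ⬝ᵥ v = 0) :
    finrank K R + finrank K S = Fintype.card ι := by
  classical
  have hS : (R.map (dotProductEquiv K ι).toLinearMap).dualCoannihilator = S := by
    ext v
    simp only [Submodule.mem_dualCoannihilator, h, Submodule.mem_map, forall_exists_index,
      and_imp, forall_apply_eq_imp_iff₂, LinearEquiv.coe_coe, dotProductEquiv_apply_apply]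
  rw [← hS, ← LinearEquiv.finrank_map_eq (dotProductEquiv K ι) R, ← finrank_fintype_fun_eq_card K]
  exact Subspace.finrank_add_finrank_dualCoannihilator_eq _

end LinearAlgebra

section Topology

variable {X β : Type*} [TopologicalSpace X]

theorem exists_subset_closure_preimage_singleton {Z A : Set X} (hZ : IsIrreducible Z)
    (hZA : Z ⊆ closure A) {f : X → β} (hf : (f '' A).Finite) :
    ∃ y ∈ A, Z ⊆ closure (f ⁻¹' {f y}) := by
  classical
  have hcover : A ⊆ ⋃ b ∈ f '' A, f ⁻¹' {b} := fun x hx ↦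
    Set.mem_biUnion (Set.mem_image_of_mem f hx) rfl
  have hZ' : Z ⊆ ⋃₀ ((hf.toFinset.image fun b ↦ closure (f ⁻¹' {b}) : Finset (Set X)) :
      Set (Set X)) := by
    refine (hZA.trans (closure_mono hcover)).trans ?_
    rw [hf.closure_biUnion, Set.iUnion₂_subset_iff]
    exact fun b hb ↦ Set.subset_sUnion_of_mem <| Finset.mem_coe.2 <|
      Finset.mem_image_of_mem _ (hf.mem_toFinset.2 hb)
  obtain ⟨_, ht, hZt⟩ := isIrreducible_iff_sUnion_isClosed.1 hZ _ (by simp) hZ'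
  obtain ⟨b, hb, rfl⟩ := Finset.mem_image.1 ht
  obtain ⟨y, hy, rfl⟩ := hf.mem_toFinset.1 hb
  exact ⟨y, hy, hZt⟩

end Topology

section PartialSums

theorem sum_univ_filter_le_fin {M : Type*} [AddCommMonoid M] {n : ℕ} (f : ℕ → M)
    (l : Fin (n + 1)) : ∑ j : Fin (n + 1) with j ≤ l, f j = ∑ j ∈ Finset.range (l + 1), f j := by
  rw [Nat.range_succ_eq_Iic, ← Fin.map_valEmbedding_Iic, Finset.sum_map]
  exact Finset.sum_congr (by ext; simp) fun _ _ ↦ rfl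

theorem sum_range_tsub_of_antitone {f : ℕ → ℕ} (hf : Antitone f) (n : ℕ) :
    ∑ j ∈ Finset.range n, (f j - f (j + 1)) = f 0 - f n := by
  induction n with
  | zero => simp
  | succ n ih =>
    have h₀ := hf n.zero_le
    have h₁ := hf n.le_succ
    rw [Finset.sum_range_succ, ih]
    lia

end PartialSums

section FiniteSets

theorem finite_setOf_forall_mem_and_forall_ge_eq {α : Type*} {s : Set α} (hs : s.Finite) (N : ℕ)
    (e : α) : {f : ℕ → α | (∀ l, f l ∈ s) ∧ ∀ l, N ≤ l → f l = e}.Finite := by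
  refine Set.Finite.of_finite_image (f := fun f (l : Fin N) ↦ f l)
    ((Set.Finite.pi' fun _ : Fin N ↦ hs).subset ?_) fun f hf g hg h ↦ funext fun l ↦ ?_
  · rintro _ ⟨f, hf, rfl⟩ l
    exact hf.1 l
  · obtain hl | hl := lt_or_ge l N
    · exact congr_fun h ⟨l, hl⟩
    · exact (hf.2 l hl).trans (hg.2 l hl).symm

end FiniteSets

namespace QuiverData

variable {Q : QuiverData} {d : Fin Q.n → ℕ} {K : Type} [Field K]

section Carrier

/-- The projection onto the component `K^{dᵢ}` of the carrier at the vertex `i`, as a map onto that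
space rather than, like `proj`, an endomorphism of the carrier. -/
def toVertex (i : Fin Q.n) : Carrier Q d K →ₗ[K] Fin (d i) → K :=
  LinearMap.funLeft K K fun w ↦ (⟨i, w⟩ : Σ i, Fin (d i))

theorem toVertex_apply (i : Fin Q.n) (m : Carrier Q d K) (w : Fin (d i)) :
    toVertex i m w = m ⟨i, w⟩ :=
  rfl

theorem toVertex_surjective (i : Fin Q.n) :
    Function.Surjective (toVertex i : Carrier Q d K →ₗ[K] Fin (d i) → K) :=
  LinearMap.funLeft_surjective_of_injective K K _ fun _ _ h ↦ eq_of_heq (Sigma.mk.inj h).2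

theorem proj_apply (i : Fin Q.n) (m : Carrier Q d K) (jv : Σ i, Fin (d i)) :
    proj Q d K i m jv = if jv.1 = i then m jv else 0 :=
  rfl

theorem proj_eq_proj_iff {i : Fin Q.n} {m m' : Carrier Q d K} :
    proj Q d K i m = proj Q d K i m' ↔ toVertex i m = toVertex i m' := by
  refine ⟨fun h ↦ funext fun w ↦ by simpa [proj_apply, toVertex_apply] using congr_fun h ⟨i, w⟩,
    fun h ↦ funext ?_⟩
  rintro ⟨j, w⟩
  obtain rfl | hj := eq_or_ne j i
  · simpa [proj_apply, toVertex_apply] using congr_fun h w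
  · simp [proj_apply, hj]

theorem toVertex_proj (i : Fin Q.n) (m : Carrier Q d K) :
    toVertex i (proj Q d K i m) = toVertex i m := by
  ext w
  simp [toVertex_apply, proj_apply]

theorem proj_proj (i j : Fin Q.n) (m : Carrier Q d K) :
    proj Q d K i (proj Q d K j m) = if i = j then proj Q d K i m else 0 := by
  ext ⟨k, w⟩
  split_ifs with h <;> simp only [proj_apply, Pi.zero_apply] <;> grind

theorem sum_proj (m : Carrier Q d K) : ∑ i, proj Q d K i m = m := by
  ext jv
  simp [Finset.sum_apply, proj_apply]

theorem arrowMap_apply_tgt (x : RepSpace Q d K) (a : Fin Q.numArrows) (m : Carrier Q d K)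
    (p : Fin (d (Q.tgt a))) :
    arrowMap Q d K x a m ⟨Q.tgt a, p⟩ = ∑ q, x ⟨a, (p, q)⟩ * m ⟨Q.src a, q⟩ := by
  simp [arrowMap]

theorem arrowMap_apply_of_ne (x : RepSpace Q d K) (a : Fin Q.numArrows) (m : Carrier Q d K)
    {jv : Σ i, Fin (d i)} (h : jv.1 ≠ Q.tgt a) : arrowMap Q d K x a m jv = 0 := by
  simp [arrowMap, h]

theorem proj_arrowMap (x : RepSpace Q d K) (a : Fin Q.numArrows) (i : Fin Q.n)
    (m : Carrier Q d K) :
    proj Q d K i (arrowMap Q d K x a m) = if i = Q.tgt a then arrowMap Q d K x a m else 0 := by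
  ext jv
  obtain h | h := eq_or_ne jv.1 (Q.tgt a)
  · split_ifs with hi <;> simp [proj_apply, h, hi, eq_comm]
  · split_ifs <;> simp [proj_apply, arrowMap_apply_of_ne x a m h]

theorem arrowMap_proj (x : RepSpace Q d K) (a : Fin Q.numArrows) (i : Fin Q.n)
    (m : Carrier Q d K) :
    arrowMap Q d K x a (proj Q d K i m) = if i = Q.src a then arrowMap Q d K x a m else 0 := by
  ext ⟨j, p⟩
  obtain rfl | h := eq_or_ne j (Q.tgt a)
  · split_ifs with hi <;> simp [arrowMap_apply_tgt, proj_apply, hi, eq_comm]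
  · split_ifs <;> simp [arrowMap_apply_of_ne x a _ (jv := ⟨j, p⟩) h]

theorem arrowMap_proj_src (x : RepSpace Q d K) (a : Fin Q.numArrows) (m : Carrier Q d K) :
    arrowMap Q d K x a (proj Q d K (Q.src a) m) = arrowMap Q d K x a m := by
  rw [arrowMap_proj, if_pos rfl]

theorem arrowMap_add (x y : RepSpace Q d K) (a : Fin Q.numArrows) :
    arrowMap Q d K (x + y) a = arrowMap Q d K x a + arrowMap Q d K y a := by
  ext1 s
  ext ⟨j, p⟩
  obtain rfl | h := eq_or_ne j (Q.tgt a)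
  · simp [arrowMap_apply_tgt, add_mul, Finset.sum_add_distrib]
  · simp [arrowMap_apply_of_ne _ a _ (jv := ⟨j, p⟩) h]

theorem arrowMap_smul (c : K) (x : RepSpace Q d K) (a : Fin Q.numArrows) :
    arrowMap Q d K (c • x) a = c • arrowMap Q d K x a := by
  ext1 s
  ext ⟨j, p⟩
  obtain rfl | h := eq_or_ne j (Q.tgt a)
  · simp [arrowMap_apply_tgt, mul_assoc, Finset.mul_sum]
  · simp [arrowMap_apply_of_ne _ a _ (jv := ⟨j, p⟩) h]

/-- The representation whose arrows `a` act by the components `e_{tgt a} ∘ f a ∘ e_{src a}` of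
arbitrary endomorphisms of the carrier space. -/
def ofEnd (f : Fin Q.numArrows → Module.End K (Carrier Q d K)) : RepSpace Q d K :=
  fun c ↦ f c.1 (Pi.single ⟨Q.src c.1, c.2.2⟩ 1) ⟨Q.tgt c.1, c.2.1⟩

theorem arrowMap_ofEnd (f : Fin Q.numArrows → Module.End K (Carrier Q d K))
    (a : Fin Q.numArrows) (m : Carrier Q d K) :
    arrowMap Q d K (ofEnd f) a m = proj Q d K (Q.tgt a) (f a (proj Q d K (Q.src a) m)) := by
  have hsum : proj Q d K (Q.src a) m =
      ∑ q, m ⟨Q.src a, q⟩ • Pi.single (⟨Q.src a, q⟩ : Σ i, Fin (d i)) 1 := by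
    ext ⟨j, w⟩
    obtain rfl | h := eq_or_ne j (Q.src a)
    · simp [proj_apply, Pi.single_apply]
    · simp [proj_apply, h]
  ext ⟨j, p⟩
  obtain rfl | h := eq_or_ne j (Q.tgt a)
  · simp [arrowMap_apply_tgt, hsum, proj_apply, ofEnd, mul_comm]
  · simp [arrowMap_apply_of_ne _ a _ (jv := ⟨j, p⟩) h, proj_apply, h]

end Carrier

section Graded

/-- A vertex-graded subspace of the carrier, i.e. one that is the direct sum of its components. -/
def Graded (N : Submodule K (Carrier Q d K)) : Prop :=
  ∀ i, ∀ m ∈ N, proj Q d K i m ∈ N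

variable {N N' : Submodule K (Carrier Q d K)}

theorem mem_of_forall_proj_mem {m : Carrier Q d K} (h : ∀ i, proj Q d K i m ∈ N) : m ∈ N :=
  sum_proj m ▸ N.sum_mem fun i _ ↦ h i

theorem vdim_eq_finrank_map_toVertex (N : Submodule K (Carrier Q d K)) (i : Fin Q.n) :
    vdim Q d K N i = Module.finrank K (N.map (toVertex i)) := by
  have hmap : (N.map (proj Q d K i)).map (toVertex i) = N.map (toVertex i) := by
    rw [← Submodule.map_comp]
    exact congr_arg (N.map ·) (LinearMap.ext (toVertex_proj i))
  have hker : N.map (proj Q d K i) ⊓ LinearMap.ker (toVertex i) = ⊥ := by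
    refine (Submodule.eq_bot_iff _).2 ?_
    rintro _ ⟨⟨m, -, rfl⟩, hm⟩
    rwa [SetLike.mem_coe, LinearMap.mem_ker, toVertex_proj, ← map_zero (toVertex i),
      ← proj_eq_proj_iff, map_zero] at hm
  rw [vdim, ← hmap, ← finrank_map_add_finrank_inf_ker (toVertex i) (N.map (proj Q d K i)), hker,
    finrank_bot, add_zero]

theorem vdim_top (i : Fin Q.n) : vdim Q d K ⊤ i = d i := by
  rw [vdim_eq_finrank_map_toVertex, Submodule.map_top,
    LinearMap.range_eq_top.2 (toVertex_surjective i), finrank_top, Module.finrank_fin_fun]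

theorem vdim_bot (i : Fin Q.n) : vdim Q d K ⊥ i = 0 := by
  rw [vdim, Submodule.map_bot, finrank_bot]

theorem vdim_mono (h : N ≤ N') : vdim Q d K N ≤ vdim Q d K N' :=
  fun _ ↦ Submodule.finrank_mono (Submodule.map_mono h)

theorem vdim_le (N : Submodule K (Carrier Q d K)) (i : Fin Q.n) : vdim Q d K N i ≤ d i :=
  (vdim_mono le_top i).trans_eq (vdim_top i)

theorem Graded.le_of_map_proj_le (hN' : Graded N')
    (h : ∀ i, N.map (proj Q d K i) ≤ N'.map (proj Q d K i)) : N ≤ N' := by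
  refine fun m hm ↦ mem_of_forall_proj_mem fun i ↦ ?_
  obtain ⟨m', hm', e⟩ := h i (Submodule.mem_map_of_mem hm)
  exact e ▸ hN' i m' hm'

theorem Graded.eq_of_le_of_vdim_eq (hN : Graded N) (h : N ≤ N')
    (hdim : vdim Q d K N = vdim Q d K N') : N = N' :=
  h.antisymm <| hN.le_of_map_proj_le fun i ↦
    (Submodule.eq_of_le_of_finrank_eq (Submodule.map_mono h) (congr_fun hdim i)).ge

theorem eq_bot_of_vdim_eq_zero (h : vdim Q d K N = 0) : N = ⊥ := by
  refine (Graded.eq_of_le_of_vdim_eq (N := ⊥) (fun i m hm ↦ ?_) bot_le ?_).symm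
  · rw [(Submodule.mem_bot K).1 hm, map_zero]
    exact zero_mem _
  · rw [h]
    exact funext vdim_bot

end Graded

section RadicalAndSocle

variable {x : RepSpace Q d K}

theorem radPow_zero (x : RepSpace Q d K) : radPow Q d K x 0 = ⊤ := by
  refine eq_top_iff.2 (le_trans ?_ (le_iSup _ ⟨[], rfl⟩))
  exact (LinearMap.range_id (R := K)).ge

theorem wordMap_cons (x : RepSpace Q d K) (a : Fin Q.numArrows) (w : List (Fin Q.numArrows))
    (m : Carrier Q d K) :
    wordMap Q d K x (a :: w) m = arrowMap Q d K x a (wordMap Q d K x w m) := by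
  simp [wordMap]

theorem wordMap_mem_radPow (x : RepSpace Q d K) (w : List (Fin Q.numArrows))
    (m : Carrier Q d K) : wordMap Q d K x w m ∈ radPow Q d K x w.length :=
  Submodule.mem_iSup_of_mem ⟨w, rfl⟩ (LinearMap.mem_range_self _ m)

theorem radPow_succ_le_iff {l : ℕ} {N : Submodule K (Carrier Q d K)} :
    radPow Q d K x (l + 1) ≤ N ↔
      ∀ a, ∀ v ∈ radPow Q d K x l, arrowMap Q d K x a v ∈ N := by
  refine ⟨fun h a v hv ↦ ?_, fun h ↦ iSup_le ?_⟩
  · suffices radPow Q d K x l ≤ N.comap (arrowMap Q d K x a) from this hv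
    refine iSup_le ?_
    rintro ⟨w, rfl⟩ _ ⟨m, rfl⟩
    exact h (wordMap_cons x a w m ▸ wordMap_mem_radPow x (a :: w) m)
  · rintro ⟨_ | ⟨a, w⟩, hw⟩
    · cases hw
    · obtain rfl : w.length = l := Nat.succ.inj hw
      rintro _ ⟨m, rfl⟩
      exact wordMap_cons x a w m ▸ h a _ (wordMap_mem_radPow x w m)

theorem arrowMap_mem_radPow {l : ℕ} (a : Fin Q.numArrows) {v : Carrier Q d K}
    (hv : v ∈ radPow Q d K x l) : arrowMap Q d K x a v ∈ radPow Q d K x (l + 1) :=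
  radPow_succ_le_iff.1 le_rfl a v hv

theorem radPow_antitone (x : RepSpace Q d K) : Antitone (radPow Q d K x) := by
  refine antitone_nat_of_succ_le fun l ↦ ?_
  induction l with
  | zero => exact radPow_zero x ▸ le_top
  | succ l ih => exact radPow_succ_le_iff.2 fun a v hv ↦ arrowMap_mem_radPow a (ih hv)

theorem radPow_le_of_forall_arrowMap_mem {F : ℕ → Submodule K (Carrier Q d K)} (h₀ : F 0 = ⊤)
    (h : ∀ l a, ∀ v ∈ F l, arrowMap Q d K x a v ∈ F (l + 1)) (l : ℕ) :
    radPow Q d K x l ≤ F l := by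
  induction l with
  | zero => exact h₀ ▸ le_top
  | succ l ih => exact radPow_succ_le_iff.2 fun a v hv ↦ h l a v (ih hv)

theorem graded_radPow (x : RepSpace Q d K) (l : ℕ) : Graded (radPow Q d K x l) := by
  intro i
  cases l with
  | zero => exact fun m _ ↦ radPow_zero x ▸ Submodule.mem_top
  | succ l =>
    refine (radPow_succ_le_iff (N := (radPow Q d K x (l + 1)).comap (proj Q d K i))).2
      fun a v hv ↦ ?_
    rw [Submodule.mem_comap, proj_arrowMap]
    split_ifs
    exacts [arrowMap_mem_radPow a hv, zero_mem _]

theorem mem_truncRepVar_iff {L : ℕ} :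
    x ∈ TruncRepVar Q d K L ↔ radPow Q d K x (L + 1) = ⊥ := by
  simp only [radPow, iSup_eq_bot, LinearMap.range_eq_bot, Subtype.forall]
  rfl

/-- The socle filtration `0 ⊆ soc₀ M ⊆ soc₁ M ⊆ ⋯` started one step earlier than `socPow`, so that
its `l`-th term is the annihilator of `J^l`. -/
noncomputable def socFiltration (x : RepSpace Q d K) : ℕ → Submodule K (Carrier Q d K)
  | 0 => ⊥
  | l + 1 => ⨅ a, (socFiltration x l).comap (arrowMap Q d K x a)

theorem socPow_eq_socFiltration (x : RepSpace Q d K) (l : ℕ) :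
    socPow Q d K x l = socFiltration x (l + 1) := by
  induction l with
  | zero => rfl
  | succ l ih => rw [socPow, socFiltration, ih]

theorem mem_socFiltration_succ {l : ℕ} {v : Carrier Q d K} :
    v ∈ socFiltration x (l + 1) ↔ ∀ a, arrowMap Q d K x a v ∈ socFiltration x l := by
  simp only [socFiltration, Submodule.mem_iInf, Submodule.mem_comap]

theorem socFiltration_monotone (x : RepSpace Q d K) : Monotone (socFiltration x) := by
  refine monotone_nat_of_le_succ fun l ↦ ?_
  induction l with
  | zero => exact bot_le
  | succ l ih =>
    exact fun v hv ↦ mem_socFiltration_succ.2 fun a ↦ ih (mem_socFiltration_succ.1 hv a)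

theorem graded_socFiltration (x : RepSpace Q d K) (l : ℕ) : Graded (socFiltration x l) := by
  intro i m hm
  cases l with
  | zero =>
    rw [(Submodule.mem_bot K).1 hm, map_zero]
    exact zero_mem _
  | succ l =>
    refine mem_socFiltration_succ.2 fun a ↦ ?_
    rw [arrowMap_proj]
    split_ifs
    exacts [mem_socFiltration_succ.1 hm a, zero_mem _]

theorem radPow_le_socFiltration {L : ℕ} (hx : x ∈ TruncRepVar Q d K L) :
    ∀ {l k : ℕ}, l + k = L + 1 → radPow Q d K x l ≤ socFiltration x k
  | _, 0, rfl => (mem_truncRepVar_iff.1 hx).le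
  | _, k + 1, h => fun v hv ↦ mem_socFiltration_succ.2 fun a ↦
      radPow_le_socFiltration hx (k := k) (by lia) (arrowMap_mem_radPow a hv)

theorem socFiltration_eq_top {L : ℕ} (hx : x ∈ TruncRepVar Q d K L) :
    socFiltration x (L + 1) = ⊤ :=
  top_unique (radPow_zero x ▸ radPow_le_socFiltration hx (zero_add _))

end RadicalAndSocle

section DimensionVectors

variable {L : ℕ} {x y : RepSpace Q d K}

/-- The dimension vectors of the radical powers `J^l M_x`; they encode the radical layering by
its complementary partial sums. -/
noncomputable def radDim (x : RepSpace Q d K) (l : ℕ) : Fin Q.n → ℕ :=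
  vdim Q d K (radPow Q d K x l)

/-- The dimension vectors of the terms of `socFiltration x`; they encode the socle layering by its
partial sums. -/
noncomputable def socDim (x : RepSpace Q d K) (l : ℕ) : Fin Q.n → ℕ :=
  vdim Q d K (socFiltration x l)

theorem radDim_zero (x : RepSpace Q d K) : radDim x 0 = d := by
  rw [radDim, radPow_zero]
  exact funext vdim_top

theorem radDim_antitone (x : RepSpace Q d K) : Antitone (radDim x) :=
  fun _ _ h ↦ vdim_mono (radPow_antitone x h)

theorem radDim_eq_zero (hx : x ∈ TruncRepVar Q d K L) {l : ℕ} (hl : L + 1 ≤ l) :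
    radDim x l = 0 := by
  rw [radDim, eq_bot_iff.2 ((radPow_antitone x hl).trans (mem_truncRepVar_iff.1 hx).le)]
  exact funext vdim_bot

theorem mem_truncRepVar_of_radDim_eq (hx : x ∈ TruncRepVar Q d K L) (h : radDim y = radDim x) :
    y ∈ TruncRepVar Q d K L :=
  mem_truncRepVar_iff.2 <| eq_bot_of_vdim_eq_zero <|
    (congr_fun h _).trans (radDim_eq_zero hx le_rfl)

theorem socDim_zero (x : RepSpace Q d K) : socDim x 0 = 0 :=
  funext vdim_bot

theorem socDim_monotone (x : RepSpace Q d K) : Monotone (socDim x) :=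
  fun _ _ h ↦ vdim_mono (socFiltration_monotone x h)

theorem socDim_eq (hx : x ∈ TruncRepVar Q d K L) {l : ℕ} (hl : L + 1 ≤ l) :
    socDim x l = d := by
  rw [socDim, eq_top_iff.2 ((socFiltration_eq_top hx).ge.trans (socFiltration_monotone x hl))]
  exact funext vdim_top

theorem sum_radLayering (x : RepSpace Q d K) (l : Fin (L + 1)) (i : Fin Q.n) :
    ∑ j with j ≤ l, radLayering Q d K L x j i = d i - radDim x (l + 1) i := by
  have h := sum_range_tsub_of_antitone (fun _ _ h ↦ radDim_antitone x h i) (l + 1)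
  rw [radDim_zero, ← sum_univ_filter_le_fin fun j ↦ radDim x j i - radDim x (j + 1) i] at h
  exact h

theorem socLayering_apply (x : RepSpace Q d K) (l : Fin (L + 1)) (i : Fin Q.n) :
    socLayering Q d K L x l i = socDim x (l + 1) i - socDim x l i := by
  rw [socLayering, socPow_eq_socFiltration]
  split_ifs with h
  · rw [h, socDim_zero]
    rfl
  · rw [socPow_eq_socFiltration, Nat.sub_add_cancel (Nat.pos_of_ne_zero h)]
    rfl

theorem sum_socLayering (x : RepSpace Q d K) (l : Fin (L + 1)) (i : Fin Q.n) :
    ∑ j with j ≤ l, socLayering Q d K L x j i = socDim x (l + 1) i := by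
  simp only [socLayering_apply]
  rw [sum_univ_filter_le_fin fun j ↦ socDim x (j + 1) i - socDim x j i,
    Finset.sum_range_tsub fun _ _ h ↦ socDim_monotone x h i, socDim_zero]
  rfl

theorem hasDimVec_radLayering (hx : x ∈ TruncRepVar Q d K L) :
    hasDimVec (radLayering Q d K L x) d := by
  intro i
  have h := sum_radLayering (L := L) x (Fin.last L) i
  simpa [Fin.le_last, radDim_eq_zero hx le_rfl] using h

theorem dominates_radLayering_iff (hx : x ∈ TruncRepVar Q d K L) :
    dominates (radLayering Q d K L y) (radLayering Q d K L x) ↔ radDim x ≤ radDim y := by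
  simp only [dominates, sum_radLayering]
  refine ⟨fun h l i ↦ ?_, fun h l i ↦ Nat.sub_le_sub_left (h _ i) _⟩
  obtain _ | l := l
  · rw [radDim_zero, radDim_zero]
  · obtain hl | hl := lt_or_ge l (L + 1)
    · exact (Nat.sub_le_sub_iff_left (vdim_le _ i)).1 (h ⟨l, hl⟩ i)
    · rw [radDim_eq_zero hx (by lia)]
      exact Nat.zero_le _

theorem dominates_socLayering_iff (hy : y ∈ TruncRepVar Q d K L) :
    dominates (socLayering Q d K L x) (socLayering Q d K L y) ↔ socDim x ≤ socDim y := by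
  simp only [dominates, sum_socLayering]
  refine ⟨fun h l i ↦ ?_, fun h l i ↦ h _ i⟩
  obtain _ | l := l
  · rw [socDim_zero, socDim_zero]
  · obtain hl | hl := lt_or_ge l (L + 1)
    · exact h ⟨l, hl⟩ i
    · rw [socDim_eq hy (by lia)]
      exact vdim_le _ i

theorem radLayering_eq_iff (hx : x ∈ TruncRepVar Q d K L) (hy : y ∈ TruncRepVar Q d K L) :
    radLayering Q d K L x = radLayering Q d K L y ↔ radDim x = radDim y := by
  refine ⟨fun h ↦ le_antisymm ?_ ?_, fun h ↦ ?_⟩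
  · exact (dominates_radLayering_iff hx).1 (h ▸ fun _ _ ↦ le_rfl)
  · exact (dominates_radLayering_iff hy).1 (h ▸ fun _ _ ↦ le_rfl)
  · exact funext₂ fun l i ↦ congr_arg (fun D : ℕ → Fin Q.n → ℕ ↦ D l i - D (l + 1) i) h

theorem socLayering_eq_iff (hx : x ∈ TruncRepVar Q d K L) (hy : y ∈ TruncRepVar Q d K L) :
    socLayering Q d K L x = socLayering Q d K L y ↔ socDim x = socDim y := by
  refine ⟨fun h ↦ le_antisymm ?_ ?_, fun h ↦ funext₂ fun l i ↦ ?_⟩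
  · exact (dominates_socLayering_iff hy).1 (h ▸ fun _ _ ↦ le_rfl)
  · exact (dominates_socLayering_iff hx).1 (h ▸ fun _ _ ↦ le_rfl)
  · rw [socLayering_apply, socLayering_apply, h]

theorem map_radPow_of_intertwines {φ : Carrier Q d K ≃ₗ[K] Carrier Q d K}
    (h : ∀ a m, φ (arrowMap Q d K x a m) = arrowMap Q d K y a (φ m)) (l : ℕ) :
    (radPow Q d K x l).map (φ : Carrier Q d K →ₗ[K] Carrier Q d K) = radPow Q d K y l := by
  induction l with
  | zero => rw [radPow_zero, radPow_zero, Submodule.map_top, LinearEquiv.range]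
  | succ l ih =>
    refine le_antisymm (Submodule.map_le_iff_le_comap.2 (radPow_succ_le_iff.2 fun a v hv ↦ ?_))
      (radPow_succ_le_iff.2 fun a v hv ↦ ?_)
    · rw [Submodule.mem_comap, LinearEquiv.coe_coe, h]
      exact arrowMap_mem_radPow a (ih ▸ Submodule.mem_map_of_mem hv)
    · obtain ⟨u, hu, rfl⟩ := ih ▸ hv
      exact ⟨_, arrowMap_mem_radPow a hu, h a u⟩

theorem vdim_map_of_commutes_proj {φ : Carrier Q d K ≃ₗ[K] Carrier Q d K}
    (h : ∀ i m, φ (proj Q d K i m) = proj Q d K i (φ m)) (N : Submodule K (Carrier Q d K)) :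
    vdim Q d K (N.map (φ : Carrier Q d K →ₗ[K] Carrier Q d K)) = vdim Q d K N := by
  ext i
  have hcomm : proj Q d K i ∘ₗ (φ : Carrier Q d K →ₗ[K] Carrier Q d K) = φ ∘ₗ proj Q d K i :=
    LinearMap.ext fun m ↦ (h i m).symm
  rw [vdim, vdim, ← Submodule.map_comp, hcomm, Submodule.map_comp, LinearEquiv.finrank_map_eq]

theorem radDim_eq_of_isoRep (h : IsoRep Q d K x y) : radDim x = radDim y := by
  obtain ⟨φ, harrow, hproj⟩ := h
  ext1 l
  rw [radDim, radDim, ← map_radPow_of_intertwines harrow, vdim_map_of_commutes_proj hproj]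

end DimensionVectors

section Duality

/-- The opposite quiver. -/
abbrev op (Q : QuiverData) : QuiverData :=
  ⟨Q.n, Q.numArrows, Q.tgt, Q.src⟩

/-- The representation of the opposite quiver given by the transposed matrices; it encodes the dual
module. -/
def transpose (x : RepSpace Q d K) : RepSpace (op Q) d K :=
  fun c ↦ x ⟨c.1, c.2.swap⟩

theorem transpose_surjective {K : Type} :
    Function.Surjective (transpose : RepSpace Q d K → RepSpace (op Q) d K) :=
  fun y ↦ ⟨fun c ↦ y ⟨c.1, c.2.swap⟩, rfl⟩

theorem continuous_transpose :
    Continuous (transpose : RepSpace Q d K → RepSpace (op Q) d K) :=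
  continuous_zariski_of_mem_polyFunctions fun _ ↦ coord_mem_polyFunctions _

theorem dotProduct_proj (i : Fin Q.n) (u m : Carrier Q d K) :
    u ⬝ᵥ proj Q d K i m = toVertex i u ⬝ᵥ toVertex i m := by
  rw [dotProduct, Fintype.sum_sigma, Fintype.sum_eq_single i]
  · exact Finset.sum_congr rfl fun w _ ↦ by
      rw [proj_apply, if_pos rfl, toVertex_apply, toVertex_apply]
  · exact fun j hj ↦ Finset.sum_eq_zero fun w _ ↦ by rw [proj_apply, if_neg hj, mul_zero]

theorem dotProduct_arrowMap (x : RepSpace Q d K) (a : Fin Q.numArrows) (u m : Carrier Q d K) :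
    u ⬝ᵥ arrowMap Q d K x a m =
      ∑ p, ∑ q, u ⟨Q.tgt a, p⟩ * (x ⟨a, (p, q)⟩ * m ⟨Q.src a, q⟩) := by
  rw [← if_pos (c := Q.tgt a = Q.tgt a) rfl (t := arrowMap Q d K x a m), ← proj_arrowMap,
    dotProduct_proj]
  exact Finset.sum_congr rfl fun p _ ↦ by
    rw [toVertex_apply, toVertex_apply, arrowMap_apply_tgt, Finset.mul_sum]

theorem arrowMap_dotProduct (x : RepSpace Q d K) (a : Fin Q.numArrows) (m u : Carrier Q d K) :
    arrowMap Q d K x a m ⬝ᵥ u = m ⬝ᵥ (arrowMap (op Q) d K (transpose x) a u : Carrier Q d K) := by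
  have hop := dotProduct_arrowMap (transpose x) a m u
  rw [dotProduct_comm, dotProduct_arrowMap, hop, Finset.sum_comm]
  exact Finset.sum_congr rfl fun q _ ↦ Finset.sum_congr rfl fun p _ ↦ by
    rw [mul_left_comm, mul_comm (u _), mul_left_comm]
    rfl

theorem mem_socFiltration_iff (x : RepSpace Q d K) {k : ℕ} {m : Carrier Q d K} :
    m ∈ socFiltration x k ↔
      radPow (op Q) d K (transpose x) k ≤ LinearMap.ker (dotProductEquiv K _ m) := by
  induction k generalizing m with
  | zero =>
    rw [radPow_zero, top_le_iff, LinearMap.ker_eq_top, LinearEquiv.map_eq_zero_iff]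
    exact Submodule.mem_bot K
  | succ k ih =>
    simp only [mem_socFiltration_succ, radPow_succ_le_iff, ih]
    exact forall_congr' fun a ↦ forall₂_congr fun u _ ↦ by
      simp only [LinearMap.mem_ker, dotProductEquiv_apply_apply, arrowMap_dotProduct]

theorem socDim_add_radDim_transpose (x : RepSpace Q d K) (k : ℕ) (i : Fin Q.n) :
    socDim x k i + radDim (transpose x) k i = d i := by
  rw [add_comm, socDim, radDim, vdim_eq_finrank_map_toVertex, vdim_eq_finrank_map_toVertex]
  conv_rhs => rw [← Fintype.card_fin (d i)]
  have hmem (m : Carrier Q d K) : m ∈ socFiltration x k ↔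
      ∀ u ∈ radPow (op Q) d K (transpose x) k, (u : Carrier Q d K) ⬝ᵥ m = 0 := by
    simp only [mem_socFiltration_iff, dotProduct_comm _ m]
    rfl
  refine finrank_add_finrank_of_mem_iff_dotProduct fun v ↦ ⟨?_, fun h ↦ ?_⟩
  · rintro ⟨m, hm, rfl⟩ _ ⟨u, hu, rfl⟩
    exact (dotProduct_proj (Q := Q) i u m).symm.trans
      ((hmem _).1 (graded_socFiltration x k i m hm) u hu)
  · obtain ⟨m, rfl⟩ := toVertex_surjective (Q := Q) i v
    refine ⟨proj Q d K i m, (hmem _).2 fun u hu ↦ ?_, toVertex_proj i m⟩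
    exact (dotProduct_proj i u m).trans (h _ (Submodule.mem_map_of_mem hu))

theorem transpose_mem_truncRepVar {L : ℕ} {x : RepSpace Q d K} (hx : x ∈ TruncRepVar Q d K L) :
    transpose x ∈ TruncRepVar (op Q) d K L := by
  refine mem_truncRepVar_iff.2 (eq_bot_of_vdim_eq_zero (funext fun i ↦ ?_))
  have h := socDim_add_radDim_transpose x (L + 1) i
  rw [socDim_eq hx le_rfl] at h
  exact Nat.add_eq_left.1 h

end Duality

section Semicontinuity

theorem arrowMap_apply_mem {X : Type*} (A : Subalgebra K (X → K)) {c : X → RepSpace Q d K}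
    {v : X → Carrier Q d K} (hc : ∀ k, (fun t ↦ c t k) ∈ A) (hv : ∀ s, (fun t ↦ v t s) ∈ A)
    (a : Fin Q.numArrows) (s : Σ i, Fin (d i)) :
    (fun t ↦ arrowMap Q d K (c t) a (v t) s) ∈ A := by
  obtain ⟨j, p⟩ := s
  obtain rfl | h := eq_or_ne j (Q.tgt a)
  · simp only [arrowMap_apply_tgt]
    exact sum_apply_mem A _ fun q _ ↦ A.mul_mem (hc _) (hv _)
  · simp only [arrowMap_apply_of_ne _ a _ (jv := ⟨j, p⟩) h]
    exact A.zero_mem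

theorem wordMap_apply_mem {X : Type*} (A : Subalgebra K (X → K)) {c : X → RepSpace Q d K}
    (hc : ∀ k, (fun t ↦ c t k) ∈ A) (w : List (Fin Q.numArrows)) (v : Carrier Q d K)
    (s : Σ i, Fin (d i)) : (fun t ↦ wordMap Q d K (c t) w v s) ∈ A := by
  induction w generalizing s with
  | nil => exact A.algebraMap_mem (v s)
  | cons a w ih =>
    simp only [wordMap_cons]
    exact arrowMap_apply_mem A hc ih a s

theorem radPow_eq_span (x : RepSpace Q d K) (l : ℕ) :
    radPow Q d K x l =
      Submodule.span K {m | ∃ w : List (Fin Q.numArrows), w.length = l ∧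
        ∃ v, wordMap Q d K x w v = m} := by
  rw [radPow, Submodule.iSup_eq_span]
  congr 1
  ext m
  simp

theorem isOpen_setOf_le_radDim_apply (n l : ℕ) (i : Fin Q.n) :
    IsOpen {y : RepSpace Q d K | n ≤ radDim y l i} := by
  refine isOpen_iff_forall_mem_open.2 fun x hx ↦ ?_
  obtain ⟨f, hf, -, hli⟩ := Submodule.exists_fun_fin_finrank_span_eq K
    (proj Q d K i '' {m | ∃ w : List (Fin Q.numArrows), w.length = l ∧
        ∃ v, wordMap Q d K x w v = m})
  choose m hm hmf using hf
  choose w hw v hv using hm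
  obtain ⟨U, hU, hxU, hUli⟩ := exists_isOpen_linearIndependent
    (V := fun y j ↦ proj Q d K i (wordMap Q d K y (w j) (v j))) (x := x)
    (fun j s ↦ linearMap_apply_mem _
      (fun s' ↦ wordMap_apply_mem _ (fun k ↦ coord_mem_polyFunctions k) (w j) (v j) s')
      (LinearMap.proj s ∘ₗ proj Q d K i)) (by simpa only [hv, hmf] using hli)
  refine ⟨U, fun y hy ↦ le_trans (b := radDim x l i) hx ?_, hU, hxU⟩
  rw [radDim, vdim, radPow_eq_span, Submodule.map_span, ← Fintype.card_fin (Module.finrank K _),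
    ← finrank_span_eq_card (hUli y hy)]
  refine Submodule.finrank_mono (Submodule.span_le.2 (Set.range_subset_iff.2 fun j ↦ ?_))
  exact Submodule.mem_map_of_mem (hw j ▸ wordMap_mem_radPow y (w j) (v j))

theorem isOpen_setOf_radDim_le {L : ℕ} {x : RepSpace Q d K} (hx : x ∈ TruncRepVar Q d K L) :
    IsOpen {y : RepSpace Q d K | radDim x ≤ radDim y} := by
  have h : {y : RepSpace Q d K | radDim x ≤ radDim y} =
      ⋂ l ∈ Finset.range (L + 1), ⋂ i, {y | radDim x l i ≤ radDim y l i} := by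
    ext y
    simp only [Set.mem_iInter, Finset.mem_range]
    refine ⟨fun h l _ i ↦ h l i, fun h l i ↦ ?_⟩
    obtain hl | hl := lt_or_ge l (L + 1)
    · exact h l hl i
    · rw [radDim_eq_zero hx hl]
      exact Nat.zero_le _
  rw [h]
  exact isOpen_biInter_finset fun l _ ↦ isOpen_iInter_of_finite fun i ↦
    isOpen_setOf_le_radDim_apply _ l i

theorem socDim_le_iff_radDim_transpose_le {x y : RepSpace Q d K} :
    socDim y ≤ socDim x ↔ radDim (transpose x) ≤ radDim (transpose y) := by
  refine forall₂_congr fun k i ↦ ?_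
  have hx := socDim_add_radDim_transpose x k i
  have hy := socDim_add_radDim_transpose y k i
  lia

theorem radDim_le_iff_socDim_transpose_le {x y : RepSpace Q d K} :
    radDim y ≤ radDim x ↔ socDim (transpose x) ≤ socDim (transpose y) :=
  (socDim_le_iff_radDim_transpose_le (x := transpose y) (y := transpose x)).symm

theorem isOpen_setOf_socDim_le {L : ℕ} {x : RepSpace Q d K} (hx : x ∈ TruncRepVar Q d K L) :
    IsOpen {y : RepSpace Q d K | socDim y ≤ socDim x} := by
  simp only [socDim_le_iff_radDim_transpose_le]
  exact (isOpen_setOf_radDim_le (transpose_mem_truncRepVar hx)).preimage continuous_transpose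

end Semicontinuity

section BaseChange

theorem ext_toVertex {m m' : Carrier Q d K} (h : ∀ i, toVertex i m = toVertex i m') : m = m' :=
  funext fun ⟨i, w⟩ ↦ congr_fun (h i) w

theorem toVertex_proj_of_ne {i j : Fin Q.n} (h : i ≠ j) (m : Carrier Q d K) :
    toVertex i (proj Q d K j m) = 0 := by
  ext w
  rw [toVertex_apply, proj_apply, if_neg h, Pi.zero_apply]

theorem exists_linearEquiv_toVertex (e : ∀ i, (Fin (d i) → K) ≃ₗ[K] (Fin (d i) → K)) :
    ∃ H : Carrier Q d K ≃ₗ[K] Carrier Q d K, ∀ i m, toVertex i (H m) = e i (toVertex i m) :=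
  ⟨LinearEquiv.piCurry K (fun i (_ : Fin (d i)) ↦ K) ≪≫ₗ LinearEquiv.piCongrRight e ≪≫ₗ
    (LinearEquiv.piCurry K fun i (_ : Fin (d i)) ↦ K).symm, fun _ _ ↦ rfl⟩

theorem exists_linearEquiv_map_eq_of_graded (N : ℕ) {F G : ℕ → Submodule K (Carrier Q d K)}
    (hF : Antitone F) (hG : Antitone G) (hFg : ∀ l, Graded (F l)) (hGg : ∀ l, Graded (G l))
    (h : ∀ l, vdim Q d K (F l) = vdim Q d K (G l)) :
    ∃ H : Carrier Q d K ≃ₗ[K] Carrier Q d K, (∀ i m, H (proj Q d K i m) = proj Q d K i (H m)) ∧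
      ∀ l < N, (F l).map (H : Carrier Q d K →ₗ[K] Carrier Q d K) = G l := by
  choose e he using fun i ↦ exists_linearEquiv_map_eq_of_antitone N
    (F := fun l ↦ (F l).map (toVertex i)) (G := fun l ↦ (G l).map (toVertex i))
    (fun _ _ hl ↦ Submodule.map_mono (hF hl)) (fun _ _ hl ↦ Submodule.map_mono (hG hl))
    (fun l ↦ by simp only [← vdim_eq_finrank_map_toVertex, h])
  obtain ⟨H, hH⟩ := exists_linearEquiv_toVertex e
  have hproj (i : Fin Q.n) (m : Carrier Q d K) : H (proj Q d K i m) = proj Q d K i (H m) := by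
    refine ext_toVertex fun j ↦ ?_
    obtain rfl | hj := eq_or_ne j i
    · rw [hH, toVertex_proj, toVertex_proj, hH]
    · rw [hH, toVertex_proj_of_ne hj, toVertex_proj_of_ne hj, map_zero]
  refine ⟨H, hproj, fun l hl ↦ Graded.eq_of_le_of_vdim_eq ?_ ?_ ?_⟩
  · rintro i _ ⟨m, hm, rfl⟩
    exact ⟨_, hFg l i m hm, hproj i m⟩
  · rintro _ ⟨m, hm, rfl⟩
    refine mem_of_forall_proj_mem fun i ↦ ?_
    obtain ⟨m', hm', h'⟩ := (he i l hl).le ⟨_, Submodule.mem_map_of_mem hm, (hH i m).symm⟩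
    exact proj_eq_proj_iff.2 h' ▸ hGg l i m' hm'
  · rw [vdim_map_of_commutes_proj hproj, h]

theorem eq_of_arrowMap_eq {x y : RepSpace Q d K}
    (h : ∀ a m, arrowMap Q d K x a m = arrowMap Q d K y a m) : x = y := by
  ext ⟨a, p, q⟩
  simpa [arrowMap_apply_tgt, Pi.single_apply] using
    congr_fun (h a (Pi.single ⟨Q.src a, q⟩ 1)) ⟨Q.tgt a, p⟩

/-- The representation obtained from `x` by the base change with matrix `M`. It is isomorphic to `x`
when `M` is invertible and respects the vertex decomposition. -/
noncomputable def conj (M : Matrix (Σ i, Fin (d i)) (Σ i, Fin (d i)) K) (x : RepSpace Q d K) :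
    RepSpace Q d K :=
  ofEnd fun a ↦ Matrix.toLin' (M * LinearMap.toMatrix' (arrowMap Q d K x a) * M⁻¹)

theorem conj_apply_mem {X : Type*} (A : Subalgebra K (X → K))
    {M : X → Matrix (Σ i, Fin (d i)) (Σ i, Fin (d i)) K} {c : X → RepSpace Q d K}
    (hM : ∀ i j, (fun t ↦ M t i j) ∈ A) (hdet : (fun t ↦ (M t).det⁻¹) ∈ A)
    (hc : ∀ k, (fun t ↦ c t k) ∈ A) (k : Coords Q d) : (fun t ↦ conj (M t) (c t) k) ∈ A := by
  simp only [conj, ofEnd, Matrix.toLin'_apply, Matrix.mulVec_single_one, Matrix.col_apply]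
  refine matrix_mul_apply_mem A (matrix_mul_apply_mem A hM fun i j ↦ ?_)
    (matrix_inv_apply_mem A hM hdet) _ _
  simp only [LinearMap.toMatrix'_apply]
  exact arrowMap_apply_mem A hc (fun _ ↦ A.algebraMap_mem _) _ _

variable {M : Matrix (Σ i, Fin (d i)) (Σ i, Fin (d i)) K} {x y : RepSpace Q d K}

theorem arrowMap_conj (hM : IsUnit M.det)
    (hproj : ∀ i m, M.mulVec (proj Q d K i m) = proj Q d K i (M.mulVec m))
    (a : Fin Q.numArrows) (m : Carrier Q d K) :
    arrowMap Q d K (conj M x) a (M.mulVec m) = M.mulVec (arrowMap Q d K x a m) := by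
  rw [conj, arrowMap_ofEnd, ← hproj, Matrix.toLin'_apply, Matrix.mulVec_mulVec,
    Matrix.nonsing_inv_mul_cancel_right _ _ hM, ← Matrix.mulVec_mulVec, ← hproj,
    LinearMap.toMatrix'_mulVec, arrowMap_proj_src, proj_arrowMap, if_pos rfl]

theorem isoRep_conj (hM : IsUnit M.det)
    (hproj : ∀ i m, M.mulVec (proj Q d K i m) = proj Q d K i (M.mulVec m)) :
    IsoRep Q d K x (conj M x) :=
  ⟨Matrix.toLin'OfInv (M.nonsing_inv_mul hM) (M.mul_nonsing_inv hM),
    fun a m ↦ (arrowMap_conj hM hproj a m).symm, hproj⟩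

theorem conj_eq_of_intertwines (hM : IsUnit M.det)
    (hproj : ∀ i m, M.mulVec (proj Q d K i m) = proj Q d K i (M.mulVec m))
    (h : ∀ a m, M.mulVec (arrowMap Q d K x a m) = arrowMap Q d K y a (M.mulVec m)) :
    conj M x = y := by
  refine eq_of_arrowMap_eq fun a m ↦ ?_
  rw [← Matrix.one_mulVec m, ← M.mul_nonsing_inv hM, ← Matrix.mulVec_mulVec,
    arrowMap_conj hM hproj, h]

theorem conj_one (x : RepSpace Q d K) : conj 1 x = x :=
  conj_eq_of_intertwines (by simp) (by simp) (by simp)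

end BaseChange

section Strata

variable {L : ℕ} {x z : RepSpace Q d K}

theorem exists_intertwining_radPow_eq (hx : x ∈ TruncRepVar Q d K L) (h : radDim z = radDim x) :
    ∃ (H : Carrier Q d K ≃ₗ[K] Carrier Q d K) (w : RepSpace Q d K),
      (∀ i m, H (proj Q d K i m) = proj Q d K i (H m)) ∧
      (∀ a m, H (arrowMap Q d K w a m) = arrowMap Q d K z a (H m)) ∧
      radPow Q d K w = radPow Q d K x := by
  obtain ⟨H, hproj, hH⟩ := exists_linearEquiv_map_eq_of_graded (L + 2) (radPow_antitone x)
    (radPow_antitone z) (graded_radPow x) (graded_radPow z) (congr_fun h.symm)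
  let w : RepSpace Q d K := ofEnd fun a ↦ H.symm ∘ₗ arrowMap Q d K z a ∘ₗ H
  have hw (a : Fin Q.numArrows) (m : Carrier Q d K) :
      H (arrowMap Q d K w a m) = arrowMap Q d K z a (H m) := by
    simp [w, arrowMap_ofEnd, hproj, arrowMap_proj_src, proj_arrowMap]
  refine ⟨H, w, hproj, hw, funext fun l ↦ ?_⟩
  obtain hl | hl := lt_or_ge l (L + 2)
  · refine Submodule.map_injective_of_injective H.injective ?_
    exact (map_radPow_of_intertwines hw l).trans (hH l hl).symm
  · have hwx : radDim w = radDim x := (radDim_eq_of_isoRep ⟨H, hw, hproj⟩).trans h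
    have hl₀ : radDim x l = 0 := radDim_eq_zero hx (by lia)
    rw [eq_bot_of_vdim_eq_zero (N := radPow Q d K x l) hl₀,
      eq_bot_of_vdim_eq_zero (N := radPow Q d K w l) ((congr_fun hwx l).trans hl₀)]

theorem radPow_combination_le (h : radPow Q d K z = radPow Q d K x) (s t : K) (l : ℕ) :
    radPow Q d K (s • x + t • z) l ≤ radPow Q d K x l := by
  refine radPow_le_of_forall_arrowMap_mem (radPow_zero x) (fun l a v hv ↦ ?_) l
  rw [arrowMap_add, arrowMap_smul, arrowMap_smul]
  refine add_mem (Submodule.smul_mem _ s (arrowMap_mem_radPow a hv)) (Submodule.smul_mem _ t ?_)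
  rw [← h] at hv ⊢
  exact arrowMap_mem_radPow a hv

theorem exists_regular_curve (hx : x ∈ TruncRepVar Q d K L) (h : radDim z = radDim x) :
    ∃ c : K → RepSpace Q d K, c 0 = x ∧ c 1 = z ∧
      (∀ t₀ ∈ ({0, 1} : Set K), ∀ k, (fun t ↦ c t k) ∈ regularAt t₀) ∧
      ∀ᶠ t in cofinite, radDim (c t) = radDim x := by
  obtain ⟨H, w, hproj, hw, hwx⟩ := exists_intertwining_radPow_eq hx h
  let M (t : K) : Matrix (Σ i, Fin (d i)) (Σ i, Fin (d i)) K :=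
    (1 - t) • 1 + t • LinearMap.toMatrix' (H : Carrier Q d K →ₗ[K] Carrier Q d K)
  let y (t : K) : RepSpace Q d K := (1 - t) • x + t • w
  have hline (t₀ : K) (p q : K) : (fun t ↦ (1 - t) * p + t * q) ∈ regularAt t₀ :=
    add_mem (mul_mem (sub_mem (one_mem _) id_mem_regularAt) (algebraMap_mem _ p))
      (mul_mem id_mem_regularAt (algebraMap_mem _ q))
  have hM (t₀ : K) (i j) : (fun t ↦ M t i j) ∈ regularAt t₀ := hline t₀ _ _
  have hy (t₀ : K) (k) : (fun t ↦ y t k) ∈ regularAt t₀ := hline t₀ _ _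
  have hdet : ∀ t ∈ ({0, 1} : Set K), (M t).det ≠ 0 := by
    rintro t (rfl | rfl)
    · simp [M]
    · simpa [M, LinearMap.det_toMatrix'] using H.isUnit_det'.ne_zero
  have hMproj (t : K) (i : Fin Q.n) (m : Carrier Q d K) :
      (M t).mulVec (proj Q d K i m) = proj Q d K i ((M t).mulVec m) := by
    simp [M, Matrix.add_mulVec, Matrix.smul_mulVec, LinearMap.toMatrix'_mulVec, hproj]
  refine ⟨fun t ↦ conj (M t) (y t), ?_, ?_, fun t₀ ht₀ ↦ ?_, ?_⟩
  · simp [M, y, conj_one]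
  · refine conj_eq_of_intertwines (hdet 1 (by simp)).isUnit (hMproj 1) fun a m ↦ ?_
    simp [M, y, LinearMap.toMatrix'_mulVec, hw]
  · exact conj_apply_mem _ (hM t₀)
      (inv_mem_regularAt (matrix_det_mem _ (hM t₀)) (hdet t₀ ht₀)) (hy t₀)
  · filter_upwards [eventually_ne_zero_of_mem_regularAt (matrix_det_mem _ (hM 0))
        (hdet 0 (by simp)),
      eventually_mem_of_mem_regularAt (hy 0) (isOpen_setOf_radDim_le hx) (by simp [y])]
      with t hMt hyt
    rw [← radDim_eq_of_isoRep (isoRep_conj hMt.isUnit (hMproj t))]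
    exact le_antisymm (fun l ↦ vdim_mono (radPow_combination_le hwx _ _ l)) hyt

theorem isPreirreducible_setOf_radDim_eq [Infinite K] (hx : x ∈ TruncRepVar Q d K L) :
    IsPreirreducible {y : RepSpace Q d K | radDim y = radDim x} := by
  rintro U V hU hV ⟨y, hy, hyU⟩ ⟨z, hz, hzV⟩
  obtain ⟨c, rfl, rfl, hc, hrad⟩ := exists_regular_curve (mem_truncRepVar_of_radDim_eq hx hy)
    (hz.trans hy.symm)
  have htU := eventually_mem_of_mem_regularAt (hc 0 (by simp)) hU hyU
  have htV := eventually_mem_of_mem_regularAt (hc 1 (by simp)) hV hzV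
  obtain ⟨t, ht, htU, htV⟩ := (hrad.and (htU.and htV)).exists
  exact ⟨c t, ht.trans hy, htU, htV⟩

end Strata

section GenericSocles

variable {L : ℕ} {x y z : RepSpace Q d K}

theorem finite_image_radDim : (radDim '' TruncRepVar Q d K L).Finite := by
  refine (finite_setOf_forall_mem_and_forall_ge_eq (Set.finite_Iic d) (L + 1) 0).subset ?_
  rintro _ ⟨x, hx, rfl⟩
  exact ⟨fun l ↦ vdim_le _, fun _ ↦ radDim_eq_zero hx⟩

theorem finite_image_socDim : (socDim '' TruncRepVar Q d K L).Finite := by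
  refine (finite_setOf_forall_mem_and_forall_ge_eq (Set.finite_Iic d) (L + 1) d).subset ?_
  rintro _ ⟨x, hx, rfl⟩
  exact ⟨fun l ↦ vdim_le _, fun _ ↦ socDim_eq hx⟩

theorem exists_socDim_le_socDim_le [Infinite K] (hx : x ∈ TruncRepVar Q d K L)
    (hy : radDim y = radDim x) (hz : radDim z = radDim x) :
    ∃ w : RepSpace Q d K, radDim w = radDim x ∧ socDim w ≤ socDim y ∧ socDim w ≤ socDim z :=
  isPreirreducible_setOf_radDim_eq hx _ _
    (isOpen_setOf_socDim_le (mem_truncRepVar_of_radDim_eq hx hy))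
    (isOpen_setOf_socDim_le (mem_truncRepVar_of_radDim_eq hx hz))
    ⟨y, hy, le_refl (socDim y)⟩ ⟨z, hz, le_refl (socDim z)⟩

/-- The module `M_x` is annihilated by `J^{L+1}`, and its socle layering is the generic one of the
modules with radical layering `S(M_x)`. -/
def IsSocGeneric (L : ℕ) (x : RepSpace Q d K) : Prop :=
  x ∈ TruncRepVar Q d K L ∧ ∀ z : RepSpace Q d K, radDim z = radDim x → socDim x ≤ socDim z

theorem exists_isSocGeneric [Infinite K] (hx : x ∈ TruncRepVar Q d K L) :
    ∃ y : RepSpace Q d K, radDim y = radDim x ∧ IsSocGeneric L y := by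
  have hsub : {y : RepSpace Q d K | radDim y = radDim x} ⊆ TruncRepVar Q d K L :=
    fun y ↦ mem_truncRepVar_of_radDim_eq hx
  obtain ⟨_, ⟨y, hy, rfl⟩, hmin⟩ := (finite_image_socDim.subset
    (Set.image_mono hsub)).exists_minimal (Set.Nonempty.image _ ⟨x, rfl⟩)
  refine ⟨y, hy, hsub hy, fun z hz ↦ ?_⟩
  obtain ⟨w, hw, hwy, hwz⟩ := exists_socDim_le_socDim_le hx hy (hz.trans hy)
  exact (hmin ⟨w, hw, rfl⟩ hwy).trans hwz

theorem genSoc_iff {S Sstar : Fin (L + 1) → Fin Q.n → ℕ} :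
    GenSoc Q d K L {x | x ∈ TruncRepVar Q d K L ∧ radLayering Q d K L x = S} Sstar ↔
      ∃ x : RepSpace Q d K, IsSocGeneric L x ∧
        radLayering Q d K L x = S ∧ socLayering Q d K L x = Sstar := by
  constructor
  · rintro ⟨hle, x, ⟨hx, rfl⟩, rfl⟩
    refine ⟨x, ⟨hx, fun z hz ↦ ?_⟩, rfl, rfl⟩
    have hzT := mem_truncRepVar_of_radDim_eq hx hz
    exact (dominates_socLayering_iff hzT).1 (hle z ⟨hzT, (radLayering_eq_iff hzT hx).2 hz⟩)
  · rintro ⟨x, ⟨hx, hle⟩, rfl, rfl⟩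
    refine ⟨fun z ⟨hz, hzx⟩ ↦ ?_, x, ⟨hx, rfl⟩, rfl⟩
    exact (dominates_socLayering_iff hz).2 (hle z ((radLayering_eq_iff hz hx).1 hzx))

/-- The module `M_x` is annihilated by `J^{L+1}`, and the pair `(S(M_x), S*(M_x))` is minimal in
the image of `Θ`. Larger dimensions of the radicals mean a smaller radical layering. -/
def IsThetaMinimal (L : ℕ) (x : RepSpace Q d K) : Prop :=
  x ∈ TruncRepVar Q d K L ∧ ∀ y ∈ TruncRepVar Q d K L,
    radDim x ≤ radDim y → socDim y ≤ socDim x → radDim y = radDim x ∧ socDim y = socDim x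

theorem IsThetaMinimal.isSocGeneric [Infinite K] (h : IsThetaMinimal L x) :
    IsSocGeneric L x := by
  obtain ⟨y, hyx, hy, hle⟩ := exists_isSocGeneric h.1
  have hsoc : socDim y = socDim x := (h.2 y hy hyx.ge (hle x hyx.symm)).2
  exact ⟨h.1, fun z hz ↦ hsoc ▸ hle z (hz.trans hyx.symm)⟩

theorem IsThetaMinimal.transpose (h : IsThetaMinimal L x) : IsThetaMinimal L (transpose x) := by
  refine ⟨transpose_mem_truncRepVar h.1, fun z hz hrad hsoc ↦ ?_⟩
  obtain ⟨y, rfl⟩ : ∃ y : RepSpace Q d K, QuiverData.transpose y = z := transpose_surjective z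
  rw [← socDim_le_iff_radDim_transpose_le] at hrad
  rw [← radDim_le_iff_socDim_transpose_le] at hsoc
  obtain ⟨hrad', hsoc'⟩ := h.2 y (transpose_mem_truncRepVar hz) hsoc hrad
  exact ⟨(socDim_le_iff_radDim_transpose_le.1 hsoc'.ge).antisymm
      (socDim_le_iff_radDim_transpose_le.1 hsoc'.le),
    (radDim_le_iff_socDim_transpose_le.1 hrad'.ge).antisymm
      (radDim_le_iff_socDim_transpose_le.1 hrad'.le)⟩

theorem IsThetaMinimal.radDim_le [Infinite K] (h : IsThetaMinimal L x)
    (hz : socDim z = socDim x) : radDim z ≤ radDim x :=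
  radDim_le_iff_socDim_transpose_le.2 <| h.transpose.isSocGeneric.2 _ <|
    (socDim_le_iff_radDim_transpose_le.1 hz.ge).antisymm
      (socDim_le_iff_radDim_transpose_le.1 hz.le)

end GenericSocles

section Heights

/-- There is an arrow from `j` to `i`. The height of a vertex is the number of its
predecessors under the transitive closure of this relation. -/
def HasArrow (Q : QuiverData) (j i : Fin Q.n) : Prop :=
  ∃ a, Q.src a = j ∧ Q.tgt a = i

theorem exists_isPathWord_of_transGen_hasArrow {j i : Fin Q.n}
    (h : Relation.TransGen (HasArrow Q) j i) :
    ∃ a w, IsPathWord Q (a :: w) ∧ Q.tgt a = i ∧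
      Q.src ((a :: w).getLast (List.cons_ne_nil a w)) = j := by
  induction h with
  | single h =>
    obtain ⟨a, hsrc, htgt⟩ := h
    exact ⟨a, [], List.isChain_singleton a, htgt, hsrc⟩
  | tail _ h ih =>
    obtain ⟨a, w, hw, rfl, hlast⟩ := ih
    obtain ⟨b, hsrc, htgt⟩ := h
    refine ⟨b, a :: w, List.isChain_cons_cons.2 ⟨hsrc, hw⟩, htgt, ?_⟩
    rwa [List.getLast_cons (List.cons_ne_nil a w)]

theorem Acyclic.exists_height (h : Acyclic Q) :
    ∃ ρ : Fin Q.n → ℕ, ∀ a, ρ (Q.src a) < ρ (Q.tgt a) := by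
  refine ⟨fun i ↦ {j | Relation.TransGen (HasArrow Q) j i}.ncard, fun a ↦ ?_⟩
  have ha : HasArrow Q (Q.src a) (Q.tgt a) := ⟨a, rfl, rfl⟩
  refine Set.ncard_lt_ncard ((Set.ssubset_iff_of_subset fun j hj ↦ hj.tail ha).2
    ⟨Q.src a, .single ha, fun hcycle ↦ ?_⟩)
  obtain ⟨b, w, hw, htgt, hsrc⟩ := exists_isPathWord_of_transGen_hasArrow hcycle
  exact h b w hw (htgt.trans hsrc.symm)

end Heights

section IncomingArrows

variable {x z : RepSpace Q d K} {i : Fin Q.n} {k l : ℕ}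

/-- The linear map sending a family of vectors, indexed by the arrows `a` into `i`, to the sum of
their images under these arrows. -/
noncomputable def incomingSum (x : RepSpace Q d K) (i : Fin Q.n) :
    ({a // Q.tgt a = i} → Carrier Q d K) →ₗ[K] Carrier Q d K :=
  LinearMap.lsum K _ K fun a : {a // Q.tgt a = i} ↦ arrowMap Q d K x a

theorem incomingSum_apply (x : RepSpace Q d K) (u : {a // Q.tgt a = i} → Carrier Q d K) :
    incomingSum x i u = ∑ a, arrowMap Q d K x a.1 (u a) := by
  simp [incomingSum, LinearMap.lsum_apply]

/-- The families of vectors of `J^l M_x` at the sources of the arrows into `i`. -/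
noncomputable def incomingRad (x : RepSpace Q d K) (i : Fin Q.n) (l : ℕ) :
    Submodule K ({a // Q.tgt a = i} → Carrier Q d K) :=
  Submodule.pi Set.univ fun a ↦ (radPow Q d K x l).map (proj Q d K (Q.src a))

theorem mem_incomingRad_iff {u : {a // Q.tgt a = i} → Carrier Q d K} :
    u ∈ incomingRad x i l ↔
      ∀ a, u a ∈ radPow Q d K x l ∧ proj Q d K (Q.src a) (u a) = u a := by
  simp only [incomingRad, Submodule.mem_pi, Set.mem_univ, true_imp_iff]
  refine forall_congr' fun a ↦ ⟨?_, fun h ↦ ⟨u a, h⟩⟩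
  rintro ⟨m, hm, e⟩
  rw [← e, proj_proj, if_pos rfl]
  exact ⟨graded_radPow x l _ m hm, rfl⟩

theorem map_incomingSum_incomingRad (x : RepSpace Q d K) (i : Fin Q.n) (l : ℕ) :
    (incomingRad x i l).map (incomingSum x i) =
      (radPow Q d K x (l + 1)).map (proj Q d K i) := by
  refine le_antisymm ?_ (Submodule.map_le_iff_le_comap.2 (radPow_succ_le_iff.2 fun a v hv ↦ ?_))
  · rintro _ ⟨u, hu, rfl⟩
    rw [incomingSum_apply]
    refine sum_mem fun a _ ↦ ⟨_, arrowMap_mem_radPow a.1 (mem_incomingRad_iff.1 hu a).1, ?_⟩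
    rw [proj_arrowMap, if_pos a.2.symm]
  · rw [Submodule.mem_comap, proj_arrowMap]
    split_ifs with ha
    · refine ⟨Pi.single ⟨a, ha.symm⟩ (proj Q d K (Q.src a) v), ?_, ?_⟩
      · exact Submodule.le_comap_single_pi _ (Submodule.mem_map_of_mem hv)
      · rw [incomingSum, LinearMap.lsum_piSingle, arrowMap_proj_src]
    · exact zero_mem _

theorem radDim_succ_add_finrank_ker_incomingSum (x : RepSpace Q d K) (i : Fin Q.n) (l : ℕ) :
    radDim x (l + 1) i +
        Module.finrank K ↥(incomingRad x i l ⊓ LinearMap.ker (incomingSum x i)) =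
      ∑ a : {a // Q.tgt a = i}, radDim x l (Q.src a) := by
  have h := finrank_map_add_finrank_inf_ker (incomingSum x i) (incomingRad x i l)
  rw [map_incomingSum_incomingRad] at h
  exact h.trans (finrank_submodule_pi _)

/-- Counting dimensions: `x` and `z` have the same incoming families, so the smaller image `J^{k+1}`
at `i` leaves `x` with more relations among those of level `k` than among those of level `k + 1`. -/
theorem exists_incoming_relation
    (hsrc : ∀ a, Q.tgt a = i → ∀ l, radDim x l (Q.src a) = radDim z l (Q.src a))
    (hlt : radDim x (k + 1) i < radDim z (k + 1) i)
    (heq : radDim x (k + 2) i = radDim z (k + 2) i) :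
    ∃ u ∈ incomingRad x i k, incomingSum x i u = 0 ∧
      ∃ a, u a ∉ radPow Q d K x (k + 1) := by
  have hsum (l : ℕ) : ∑ a : {a // Q.tgt a = i}, radDim x l (Q.src a) =
      ∑ a : {a // Q.tgt a = i}, radDim z l (Q.src a) :=
    Finset.sum_congr rfl fun a _ ↦ hsrc a a.2 l
  have hmono : incomingRad z i (k + 1) ≤ incomingRad z i k := fun u hu a ha ↦
    Submodule.map_mono (radPow_antitone z k.le_succ) (hu a ha)
  have hnot : ¬ incomingRad x i k ⊓ LinearMap.ker (incomingSum x i) ≤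
      incomingRad x i (k + 1) ⊓ LinearMap.ker (incomingSum x i) := by
    intro hle
    have hx₀ := radDim_succ_add_finrank_ker_incomingSum x i k
    have hx₁ := radDim_succ_add_finrank_ker_incomingSum x i (k + 1)
    have hz₀ := radDim_succ_add_finrank_ker_incomingSum z i k
    have hz₁ := radDim_succ_add_finrank_ker_incomingSum z i (k + 1)
    have hx := Submodule.finrank_mono hle
    have hz := Submodule.finrank_mono (inf_le_inf_right (LinearMap.ker (incomingSum z i)) hmono)
    rw [hsum] at hx₀ hx₁
    lia
  obtain ⟨u, ⟨hu, hu₀⟩, hu'⟩ := SetLike.not_le_iff_exists.1 hnot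
  refine ⟨u, hu, hu₀, ?_⟩
  by_contra! hmem
  exact hu' ⟨mem_incomingRad_iff.2 fun a ↦ ⟨hmem a, (mem_incomingRad_iff.1 hu a).2⟩, hu₀⟩

end IncomingArrows

section RankOnePerturbations

variable {L k l : ℕ} {x y z : RepSpace Q d K} {ρ : Fin Q.n → ℕ}

/-- The representation in which all arrows except `a` act as zero, and `a` acts by the rank-one map
`v ↦ ξ(v_{src a}) m_{tgt a}`. -/
noncomputable def rankOne (a : Fin Q.numArrows) (ξ : Module.Dual K (Carrier Q d K))
    (m : Carrier Q d K) : RepSpace Q d K :=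
  ofEnd (Pi.single a (ξ.smulRight m))

theorem arrowMap_add_smul_rankOne (x : RepSpace Q d K) (s : K) (a₀ a : Fin Q.numArrows)
    (ξ : Module.Dual K (Carrier Q d K)) (m v : Carrier Q d K) :
    arrowMap Q d K (x + s • rankOne a₀ ξ m) a v = arrowMap Q d K x a v +
      if a = a₀ then (s * ξ (proj Q d K (Q.src a) v)) • proj Q d K (Q.tgt a) m else 0 := by
  rw [arrowMap_add, arrowMap_smul, LinearMap.add_apply, LinearMap.smul_apply, rankOne,
    arrowMap_ofEnd]
  split_ifs with h
  · rw [h, Pi.single_eq_same, LinearMap.smulRight_apply, map_smul, smul_smul]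
  · rw [Pi.single_eq_of_ne h, LinearMap.zero_apply, map_zero, smul_zero]

/-- The sum of the components of the carrier at the vertices of height at least `r`,
which is a subrepresentation of every `M_x` if heights increase along the arrows. -/
def heightGE (ρ : Fin Q.n → ℕ) (r : ℕ) : Submodule K (Carrier Q d K) :=
  ⨅ j : {j // ρ j < r}, LinearMap.ker (proj Q d K j)

theorem mem_heightGE_iff {r : ℕ} {v : Carrier Q d K} :
    v ∈ heightGE ρ r ↔ ∀ j, ρ j < r → proj Q d K j v = 0 := by
  simp [heightGE]

theorem arrowMap_mem_heightGE (hρ : ∀ a, ρ (Q.src a) < ρ (Q.tgt a)) {r : ℕ} {v : Carrier Q d K}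
    (hv : v ∈ heightGE ρ r) (a : Fin Q.numArrows) : arrowMap Q d K x a v ∈ heightGE ρ r := by
  refine mem_heightGE_iff.2 fun j hj ↦ ?_
  rw [proj_arrowMap]
  split_ifs with ha
  · rw [← arrowMap_proj_src, mem_heightGE_iff.1 hv _ ((hρ a).trans (ha ▸ hj)), map_zero]
  · rfl

theorem proj_mem_heightGE (i : Fin Q.n) (m : Carrier Q d K) :
    proj Q d K i m ∈ heightGE ρ (ρ i) := by
  refine mem_heightGE_iff.2 fun j hj ↦ ?_
  rw [proj_proj, if_neg]
  rintro rfl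
  exact hj.false

/-- The submodules `J^l M_x + (soc_{L-l} M_x)_{≥ ρ (tgt a₀)}` form a filtration which the perturbed
arrows still shift: `a₀` sends `J^l M_x` into the second summand and kills that summand. -/
theorem add_smul_rankOne_mem_truncRepVar (hρ : ∀ a, ρ (Q.src a) < ρ (Q.tgt a))
    (hx : x ∈ TruncRepVar Q d K L) {a₀ : Fin Q.numArrows} {ξ : Module.Dual K (Carrier Q d K)}
    {m : Carrier Q d K} (hξ : radPow Q d K x (k + 1) ≤ LinearMap.ker ξ)
    (hm : m ∈ socFiltration x (L - k)) (s : K) :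
    x + s • rankOne a₀ ξ m ∈ TruncRepVar Q d K L := by
  let F (l : ℕ) : Submodule K (Carrier Q d K) :=
    radPow Q d K x l ⊔ socFiltration x (L + 1 - l) ⊓ heightGE ρ (ρ (Q.tgt a₀))
  have hF (l : ℕ) (a : Fin Q.numArrows) (v : Carrier Q d K) (hv : v ∈ F l) :
      arrowMap Q d K (x + s • rankOne a₀ ξ m) a v ∈ F (l + 1) := by
    obtain ⟨v₁, hv₁, v₂, ⟨hv₂, hv₂'⟩, rfl⟩ := Submodule.mem_sup.1 hv
    rw [arrowMap_add_smul_rankOne, map_add, add_assoc]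
    refine add_mem (Submodule.mem_sup_left (arrowMap_mem_radPow a hv₁))
      (Submodule.mem_sup_right (add_mem ⟨?_, arrowMap_mem_heightGE hρ hv₂' a⟩ ?_))
    · have hv₂ := socFiltration_monotone x (show L + 1 - l ≤ L + 1 - (l + 1) + 1 by lia) hv₂
      exact mem_socFiltration_succ.1 hv₂ a
    split_ifs with ha
    · subst ha
      rw [map_add, mem_heightGE_iff.1 hv₂' _ (hρ a), add_zero]
      obtain hl | hl := le_or_gt l k
      · refine Submodule.smul_mem _ _ ⟨?_, proj_mem_heightGE _ m⟩
        exact socFiltration_monotone x (by lia) (graded_socFiltration x _ _ m hm)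
      · rw [show ξ (proj Q d K (Q.src a) v₁) = 0 from
          hξ (graded_radPow x _ _ v₁ (radPow_antitone x hl hv₁)), mul_zero, zero_smul]
        exact zero_mem _
    · exact zero_mem _
  rw [mem_truncRepVar_iff, eq_bot_iff]
  refine (radPow_le_of_forall_arrowMap_mem (by simp [F, radPow_zero]) hF (L + 1)).trans ?_
  simp [F, mem_truncRepVar_iff.1 hx, socFiltration]

theorem proj_mem_radPow_of_arrowMap_eq (hρ : ∀ a, ρ (Q.src a) < ρ (Q.tgt a)) {r : ℕ}
    (h : ∀ a, ρ (Q.tgt a) < r → arrowMap Q d K y a = arrowMap Q d K x a) {j : Fin Q.n}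
    (hj : ρ j < r) {v : Carrier Q d K} (hv : v ∈ radPow Q d K x l) :
    proj Q d K j v ∈ radPow Q d K y l := by
  induction l generalizing j v with
  | zero => exact radPow_zero y ▸ Submodule.mem_top
  | succ l ih =>
    suffices hle : radPow Q d K x (l + 1) ≤ (radPow Q d K y (l + 1)).comap (proj Q d K j) from
      hle hv
    refine radPow_succ_le_iff.2 fun a v hv ↦ ?_
    rw [Submodule.mem_comap, proj_arrowMap]
    split_ifs with ha
    · subst ha
      rw [← h a hj, ← arrowMap_proj_src]
      exact arrowMap_mem_radPow a (ih ((hρ a).trans hj) hv)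
    · exact zero_mem _

theorem proj_src_mem_radPow_add_smul_rankOne (hρ : ∀ a, ρ (Q.src a) < ρ (Q.tgt a))
    {a₀ a : Fin Q.numArrows} (ha : Q.tgt a = Q.tgt a₀) (ξ : Module.Dual K (Carrier Q d K))
    (m : Carrier Q d K) (s : K) {v : Carrier Q d K} (hv : v ∈ radPow Q d K x l) :
    proj Q d K (Q.src a) v ∈ radPow Q d K (x + s • rankOne a₀ ξ m) l := by
  refine proj_mem_radPow_of_arrowMap_eq hρ (r := ρ (Q.tgt a₀)) (fun b hb ↦ ?_) (ha ▸ hρ a) hv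
  refine LinearMap.ext fun v ↦ ?_
  rw [arrowMap_add_smul_rankOne, if_neg, add_zero]
  rintro rfl
  exact hb.false

variable {i : Fin Q.n} {a₀ : {a // Q.tgt a = i}} {ξ : Module.Dual K (Carrier Q d K)}
  {m : Carrier Q d K} {s : K}

/-- Under the perturbation, the relation `u` becomes a nonzero multiple of the `i`-component of
`m`. -/
theorem proj_mem_radPow_add_smul_rankOne (hρ : ∀ a, ρ (Q.src a) < ρ (Q.tgt a))
    {u : {a // Q.tgt a = i} → Carrier Q d K} (hu : u ∈ incomingRad x i k)
    (hu₀ : incomingSum x i u = 0) (hξ : ξ (u a₀) ≠ 0) (hs : s ≠ 0) :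
    proj Q d K i m ∈ radPow Q d K (x + s • rankOne a₀ ξ m) (k + 1) := by
  rw [mem_incomingRad_iff] at hu
  have hsum : incomingSum (x + s • rankOne a₀ ξ m) i u = (s * ξ (u a₀)) • proj Q d K i m := by
    rw [incomingSum_apply] at hu₀ ⊢
    simp only [arrowMap_add_smul_rankOne, Finset.sum_add_distrib, hu₀, zero_add,
      Subtype.coe_inj, Finset.sum_ite_eq', Finset.mem_univ, if_true, (hu _).2, a₀.2]
  rw [← Submodule.smul_mem_iff _ (mul_ne_zero hs hξ), ← hsum, incomingSum_apply]
  refine sum_mem fun a _ ↦ arrowMap_mem_radPow a.1 ?_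
  rw [← (hu a).2]
  exact proj_src_mem_radPow_add_smul_rankOne hρ (a.2.trans a₀.2.symm) ξ m s (hu a).1

theorem proj_mem_radPow_add_smul_rankOne_of_mem (hρ : ∀ a, ρ (Q.src a) < ρ (Q.tgt a))
    (hm : proj Q d K i m ∈ radPow Q d K (x + s • rankOne a₀ ξ m) (k + 1)) {v : Carrier Q d K}
    (hv : v ∈ radPow Q d K x (k + 1)) :
    proj Q d K i v ∈ radPow Q d K (x + s • rankOne a₀ ξ m) (k + 1) := by
  suffices hle : radPow Q d K x (k + 1) ≤
      (radPow Q d K (x + s • rankOne a₀ ξ m) (k + 1)).comap (proj Q d K i) from hle hv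
  refine radPow_succ_le_iff.2 fun a v hv ↦ ?_
  rw [Submodule.mem_comap, proj_arrowMap]
  split_ifs with ha
  · have hmem := arrowMap_mem_radPow a (proj_src_mem_radPow_add_smul_rankOne hρ
      (ha.symm.trans a₀.2.symm) ξ m s hv)
    rw [arrowMap_proj_src, arrowMap_add_smul_rankOne, ← ha] at hmem
    refine (add_mem_cancel_right ?_).1 hmem
    split_ifs
    exacts [Submodule.smul_mem _ _ hm, zero_mem _]
  · exact zero_mem _

theorem radDim_lt_radDim_add_smul_rankOne (hρ : ∀ a, ρ (Q.src a) < ρ (Q.tgt a))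
    (hm : proj Q d K i m ∈ radPow Q d K (x + s • rankOne a₀ ξ m) (k + 1))
    (hm' : proj Q d K i m ∉ radPow Q d K x (k + 1)) :
    radDim x (k + 1) i < radDim (x + s • rankOne a₀ ξ m) (k + 1) i := by
  refine Submodule.finrank_lt_finrank_of_lt (SetLike.lt_iff_le_and_exists.2
    ⟨?_, proj Q d K i m, ⟨_, hm, by rw [proj_proj, if_pos rfl]⟩, ?_⟩)
  · rintro _ ⟨v, hv, rfl⟩
    exact ⟨_, proj_mem_radPow_add_smul_rankOne_of_mem hρ hm hv, by rw [proj_proj, if_pos rfl]⟩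
  · rintro ⟨v, hv, e⟩
    exact hm' (e ▸ graded_radPow x _ i v hv)

end RankOnePerturbations

section Degeneration

variable {L k : ℕ} {x z : RepSpace Q d K} {i : Fin Q.n}

theorem exists_lowest_radDim_lt (ρ : Fin Q.n → ℕ) (hρ : ∀ a, ρ (Q.src a) < ρ (Q.tgt a))
    (hx : x ∈ TruncRepVar Q d K L) (hz : z ∈ TruncRepVar Q d K L) (hlt : radDim x < radDim z) :
    ∃ i, ∃ k ≤ L, (∀ a, Q.tgt a = i → ∀ l, radDim x l (Q.src a) = radDim z l (Q.src a)) ∧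
      radDim x (k + 1) i < radDim z (k + 1) i ∧ radDim x (k + 2) i = radDim z (k + 2) i := by
  have hne : {i | ∃ l, radDim x l i ≠ radDim z l i}.Nonempty := by
    obtain ⟨l, hl⟩ := Function.ne_iff.1 hlt.ne
    obtain ⟨i, hi⟩ := Function.ne_iff.1 hl
    exact ⟨i, l, hi⟩
  obtain ⟨i, ⟨l, hl⟩, hmin⟩ := Set.exists_min_image _ ρ (Set.toFinite _) hne
  have hbound {l : ℕ} (hl : radDim x l i ≠ radDim z l i) : l ≤ L := by
    by_contra! h
    exact hl (by rw [radDim_eq_zero hx h, radDim_eq_zero hz h])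
  obtain ⟨l, hl, hmax⟩ := Set.exists_max_image {l | radDim x l i ≠ radDim z l i} id
    ((Set.finite_Iic L).subset fun _ ↦ hbound) ⟨l, hl⟩
  obtain _ | k := l
  · exact absurd (by rw [radDim_zero, radDim_zero]) hl
  refine ⟨i, k, (Nat.lt_of_succ_le (hbound hl)).le, ?_, (hlt.le _ _).lt_of_ne hl, ?_⟩
  · rintro a rfl l
    by_contra h
    exact (hρ a).not_ge (hmin _ ⟨l, h⟩)
  · by_contra h
    exact (Nat.lt_succ_self _).not_ge (hmax _ h)

theorem exists_mem_socFiltration_proj_notMem_radPow (hz : z ∈ TruncRepVar Q d K L) (hk : k ≤ L)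
    (hsoc : socDim z ≤ socDim x) (hlt : radDim x (k + 1) i < radDim z (k + 1) i) :
    ∃ m ∈ socFiltration x (L - k), proj Q d K i m ∉ radPow Q d K x (k + 1) := by
  by_contra! h
  have hsub : (socFiltration x (L - k)).map (proj Q d K i) ≤
      (radPow Q d K x (k + 1)).map (proj Q d K i) := by
    rintro _ ⟨m, hm, rfl⟩
    exact ⟨_, h m hm, by rw [proj_proj, if_pos rfl]⟩
  refine hlt.not_ge ?_
  calc radDim z (k + 1) i
    _ ≤ socDim z (L - k) i := vdim_mono (radPow_le_socFiltration hz (by lia)) i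
    _ ≤ socDim x (L - k) i := hsoc _ i
    _ ≤ radDim x (k + 1) i := Submodule.finrank_mono hsub

theorem exists_perturbation_not_radDim_le (hacyc : Acyclic Q) (hx : x ∈ TruncRepVar Q d K L)
    (hz : z ∈ TruncRepVar Q d K L) (hrad : radDim x < radDim z) (hsoc : socDim z ≤ socDim x) :
    ∃ w : RepSpace Q d K, ∀ s : K, s ≠ 0 →
      x + s • w ∈ TruncRepVar Q d K L ∧ ¬ radDim (x + s • w) ≤ radDim x := by
  obtain ⟨ρ, hρ⟩ := hacyc.exists_height
  obtain ⟨i, k, hk, hsrc, hlt, heq⟩ := exists_lowest_radDim_lt ρ hρ hx hz hrad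
  obtain ⟨u, hu, hu₀, a₀, ha₀⟩ := exists_incoming_relation hsrc hlt heq
  obtain ⟨m, hm, hm'⟩ := exists_mem_socFiltration_proj_notMem_radPow hz hk hsoc hlt
  obtain ⟨ξ, hξu, hξ⟩ := Submodule.exists_le_ker_of_notMem ha₀
  refine ⟨rankOne a₀ ξ m, fun s hs ↦ ⟨?_, fun hle ↦ ?_⟩⟩
  · exact add_smul_rankOne_mem_truncRepVar hρ hx hξ hm s
  · have hmem := proj_mem_radPow_add_smul_rankOne (m := m) hρ hu hu₀ hξu hs
    exact (radDim_lt_radDim_add_smul_rankOne hρ hmem hm').not_ge (hle _ i)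

end Degeneration

section IrreducibleComponents

variable {L : ℕ} {x y z : TruncV Q d K L}

/-- The stratum `Rep S(M_x)` of `Rep_d(Λ)`, described by the dimension vectors of the submodules
`J^l M` instead of those of the radical layers. -/
def radStratum (x : TruncV Q d K L) : Set (TruncV Q d K L) :=
  {y | radDim y.1 = radDim x.1}

theorem radStratum_eq : radStratum x =
    {y : TruncV Q d K L | radLayering Q d K L y.1 = radLayering Q d K L x.1} :=
  Set.ext fun y ↦ (radLayering_eq_iff y.2 x.2).symm

theorem mem_radStratum_self : x ∈ radStratum x :=
  Eq.refl (radDim x.1)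

theorem isIrreducible_closure_radStratum [Infinite K] :
    IsIrreducible (closure (radStratum x)) := by
  refine IsIrreducible.closure ⟨⟨x, mem_radStratum_self⟩, ?_⟩
  rintro u v hu hv ⟨y, hy, hyu⟩ ⟨z, hz, hzv⟩
  obtain ⟨U, hU, rfl⟩ := isOpen_induced_iff.1 hu
  obtain ⟨V, hV, rfl⟩ := isOpen_induced_iff.1 hv
  obtain ⟨w, hw, hwUV⟩ :=
    isPreirreducible_setOf_radDim_eq x.2 U V hU hV ⟨y.1, hy, hyu⟩ ⟨z.1, hz, hzv⟩
  exact ⟨⟨w, mem_truncRepVar_of_radDim_eq x.2 hw⟩, hw, hwUV⟩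

theorem radDim_le_of_mem_closure_radStratum (h : x ∈ closure (radStratum y)) :
    radDim x.1 ≤ radDim y.1 := by
  obtain ⟨w, hxw, hw⟩ := mem_closure_iff.1 h _
    ((isOpen_setOf_radDim_le x.2).preimage continuous_subtype_val) (le_refl (radDim x.1))
  exact hxw.trans hw.le

theorem socDim_le_of_mem_closure_radStratum {y' : RepSpace Q d K} (hy' : IsSocGeneric L y')
    (hrad : radDim y' = radDim y.1) (h : x ∈ closure (radStratum y)) :
    socDim y' ≤ socDim x.1 := by
  obtain ⟨w, hwx, hw⟩ := mem_closure_iff.1 h _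
    ((isOpen_setOf_socDim_le x.2).preimage continuous_subtype_val) (le_refl (socDim x.1))
  exact (hy'.2 w.1 (hw.trans hrad.symm)).trans hwx

theorem exists_subset_closure_radStratum {Z A : Set (TruncV Q d K L)} (hZ : IsIrreducible Z)
    (hZA : Z ⊆ closure A) : ∃ y ∈ A, Z ⊆ closure (radStratum y) := by
  have hfin : ((fun y : TruncV Q d K L ↦ radDim (K := K) y.1) '' A).Finite :=
    finite_image_radDim.subset (Set.image_subset_iff.2 fun y _ ↦ Set.mem_image_of_mem _ y.2)
  exact exists_subset_closure_preimage_singleton hZ hZA hfin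

theorem mem_closure_setOf_not_radDim_le [Infinite K] (hacyc : Acyclic Q)
    (hrad : radDim x.1 < radDim z.1) (hsoc : socDim z.1 ≤ socDim x.1) :
    x ∈ closure {y : TruncV Q d K L | ¬ radDim y.1 ≤ radDim x.1} := by
  obtain ⟨w, hw⟩ := exists_perturbation_not_radDim_le hacyc x.2 z.2 hrad hsoc
  refine mem_closure_iff.2 fun o ho hxo ↦ ?_
  obtain ⟨U, hU, rfl⟩ := isOpen_induced_iff.1 ho
  have hline (k : Coords Q d) : (fun t ↦ (x.1 + t • w) k) ∈ regularAt (0 : K) :=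
    add_mem ((regularAt 0).algebraMap_mem (x.1 k))
      (mul_mem id_mem_regularAt ((regularAt 0).algebraMap_mem (w k)))
  have hU₀ := eventually_mem_of_mem_regularAt hline hU (by simpa using hxo)
  obtain ⟨t, ht, ht₀⟩ := (hU₀.and (eventually_cofinite_ne 0)).exists
  exact ⟨⟨_, (hw t ht₀).1⟩, ht, (hw t ht₀).2⟩

theorem radDim_eq_of_closure_radStratum_mem_irreducibleComponents [Infinite K]
    (hacyc : Acyclic Q) (hx : IsSocGeneric L x.1)
    (hcomp : closure (radStratum x) ∈ irreducibleComponents (TruncV Q d K L))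
    (hrad : radDim x.1 ≤ radDim z.1) (hsoc : socDim z.1 ≤ socDim x.1) :
    radDim z.1 = radDim x.1 := by
  by_contra hne
  have hsub : radStratum x ⊆ closure {y : TruncV Q d K L | ¬ radDim y.1 ≤ radDim x.1} := by
    intro x' hx'
    rw [← show radDim x'.1 = radDim x.1 from hx'] at hne hrad ⊢
    exact mem_closure_setOf_not_radDim_le hacyc (hrad.lt_of_ne' hne) (hsoc.trans (hx.2 _ hx'))
  obtain ⟨y, hy, hxy⟩ := exists_subset_closure_radStratum isIrreducible_closure_radStratum
    (closure_minimal hsub isClosed_closure)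
  have hyx : closure (radStratum y) ⊆ closure (radStratum x) :=
    hcomp.2 isIrreducible_closure_radStratum hxy
  exact hy (radDim_le_of_mem_closure_radStratum (hyx (subset_closure mem_radStratum_self)))

theorem closure_radStratum_mem_irreducibleComponents [Infinite K]
    (hmin : ∀ y : RepSpace Q d K, IsSocGeneric L y → radDim x.1 ≤ radDim y →
      socDim y ≤ socDim x.1 → radDim y = radDim x.1) :
    closure (radStratum x) ∈ irreducibleComponents (TruncV Q d K L) := by
  refine ⟨isIrreducible_closure_radStratum, fun Z hZ hxZ ↦ ?_⟩
  obtain ⟨y, -, hZy⟩ := exists_subset_closure_radStratum (A := Set.univ) hZ (by simp)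
  have hxy : x ∈ closure (radStratum y) := hZy (hxZ (subset_closure mem_radStratum_self))
  obtain ⟨y', hy'y, hy'⟩ := exists_isSocGeneric y.2
  have hrad : radDim y' = radDim x.1 := hmin y' hy'
    (hy'y ▸ radDim_le_of_mem_closure_radStratum hxy)
    (socDim_le_of_mem_closure_radStratum hy' hy'y hxy)
  have hstrata : radStratum y = radStratum x := by
    rw [radStratum, ← hy'y, hrad, radStratum]
  exact hstrata ▸ hZy

theorem closure_radStratum_mem_irreducibleComponents_iff [Infinite K] (hacyc : Acyclic Q)
    (hx : IsSocGeneric L x.1) :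
    closure (radStratum x) ∈ irreducibleComponents (TruncV Q d K L) ↔
      ∀ y : RepSpace Q d K, IsSocGeneric L y → radDim x.1 ≤ radDim y → socDim y ≤ socDim x.1 →
        radDim y = radDim x.1 ∧ socDim y = socDim x.1 := by
  refine ⟨fun hcomp y hy hrad hsoc ↦ ?_, fun h ↦
    closure_radStratum_mem_irreducibleComponents fun y hy hrad hsoc ↦ (h y hy hrad hsoc).1⟩
  have hyx : radDim y = radDim x.1 :=
    radDim_eq_of_closure_radStratum_mem_irreducibleComponents (z := ⟨y, hy.1⟩)
      hacyc hx hcomp hrad hsoc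
  exact ⟨hyx, hsoc.antisymm (hx.2 y hyx)⟩

end IrreducibleComponents

section Layerings

variable {L : ℕ} {x : RepSpace Q d K}

theorem forall_genSoc_minimal_iff (hx : x ∈ TruncRepVar Q d K L) :
    (∀ S Sstar : Fin (L + 1) → Fin Q.n → ℕ, hasDimVec S d →
        GenSoc Q d K L {y | y ∈ TruncRepVar Q d K L ∧ radLayering Q d K L y = S} Sstar →
        dominates S (radLayering Q d K L x) → dominates Sstar (socLayering Q d K L x) →
        S = radLayering Q d K L x ∧ Sstar = socLayering Q d K L x) ↔
      ∀ y : RepSpace Q d K, IsSocGeneric L y → radDim x ≤ radDim y → socDim y ≤ socDim x →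
        radDim y = radDim x ∧ socDim y = socDim x := by
  constructor
  · intro h y hy hrad hsoc
    rw [← radLayering_eq_iff hy.1 hx, ← socLayering_eq_iff hy.1 hx]
    exact h _ _ (hasDimVec_radLayering hy.1) (genSoc_iff.2 ⟨y, hy, rfl, rfl⟩)
      ((dominates_radLayering_iff hx).2 hrad) ((dominates_socLayering_iff hx).2 hsoc)
  · intro h S Sstar _ hgen hrad hsoc
    obtain ⟨y, hy, rfl, rfl⟩ := genSoc_iff.1 hgen
    rw [radLayering_eq_iff hy.1 hx, socLayering_eq_iff hy.1 hx]
    exact h y hy ((dominates_radLayering_iff hx).1 hrad) ((dominates_socLayering_iff hx).1 hsoc)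

theorem isThetaMinimal_iff (hx : x ∈ TruncRepVar Q d K L) : IsThetaMinimal L x ↔
    ∀ y : TruncV Q d K L,
      dominates (radLayering Q d K L y.1) (radLayering Q d K L x) →
      dominates (socLayering Q d K L y.1) (socLayering Q d K L x) →
      radLayering Q d K L y.1 = radLayering Q d K L x ∧
        socLayering Q d K L y.1 = socLayering Q d K L x := by
  simp only [IsThetaMinimal, hx, true_and, Subtype.forall]
  refine forall₂_congr fun y hy ↦ ?_
  rw [dominates_radLayering_iff hx, dominates_socLayering_iff hx, radLayering_eq_iff hy hx,
    socLayering_eq_iff hy hx]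

end Layerings

end QuiverData

open QuiverData in
theorem statement_15_general (K : Type) [Field K] [Infinite K]
    (Q : QuiverData) (L : ℕ) (hacyc : Acyclic Q)
    (d : Fin Q.n → ℕ) (S Sstar : Fin (L + 1) → Fin Q.n → ℕ)
    (hgen : GenSoc Q d K L
      {x | x ∈ TruncRepVar Q d K L ∧ radLayering Q d K L x = S} Sstar) :
    ((closure {x : TruncV Q d K L | radLayering Q d K L x.1 = S}
        ∈ irreducibleComponents (TruncV Q d K L))
      ↔ ∀ (S' Sstar' : Fin (L + 1) → Fin Q.n → ℕ), hasDimVec S' d →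
          GenSoc Q d K L
            {x | x ∈ TruncRepVar Q d K L ∧ radLayering Q d K L x = S'} Sstar' →
          dominates S' S → dominates Sstar' Sstar → (S' = S ∧ Sstar' = Sstar)) ∧
    ∀ x : TruncV Q d K L,
      (∀ y : TruncV Q d K L,
        dominates (radLayering Q d K L y.1) (radLayering Q d K L x.1) →
        dominates (socLayering Q d K L y.1) (socLayering Q d K L x.1) →
        (radLayering Q d K L y.1 = radLayering Q d K L x.1 ∧
          socLayering Q d K L y.1 = socLayering Q d K L x.1)) →
      (GenSoc Q d K L
          {z | z ∈ TruncRepVar Q d K L ∧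
            radLayering Q d K L z = radLayering Q d K L x.1}
          (socLayering Q d K L x.1) ∧
        ∀ z ∈ TruncRepVar Q d K L,
          socLayering Q d K L z = socLayering Q d K L x.1 →
          dominates (radLayering Q d K L x.1) (radLayering Q d K L z)) := by
  constructor
  · obtain ⟨x, hx, rfl, rfl⟩ := genSoc_iff.1 hgen
    rw [forall_genSoc_minimal_iff hx.1, ← radStratum_eq (x := ⟨x, hx.1⟩)]
    exact closure_radStratum_mem_irreducibleComponents_iff hacyc hx
  · intro x hmin
    have hx : IsThetaMinimal L x.1 := (isThetaMinimal_iff x.2).2 hmin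
    refine ⟨genSoc_iff.2 ⟨x.1, hx.isSocGeneric, rfl, rfl⟩, fun z hz hzx ↦ ?_⟩
    exact (dominates_radLayering_iff hz).2 (hx.radDim_le ((socLayering_eq_iff hz x.2).1 hzx))

open QuiverData in
/-- Let `Λ` be a truncated path algebra whose quiver is acyclic, `S` a
`d`-dimensional (realizable) semisimple sequence and `S*` the generic socle layering of
`Rep S`. Then the closure of `Rep S` is an irreducible component of `Rep_d(Λ)` iff
`(S, S*)` is a minimal element of the set of pairs `(Ŝ, Ŝ*)` with `Ŝ` realizable of
dimension vector `d` and `Ŝ*` the generic socle layering of `Rep Ŝ`. Moreover, whenever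
the value `(S(M_x), S*(M_x))` of `Θ` at a point `x` is minimal in the image of `Θ`, then
`S*(M_x)` is the generic socle layering of `Rep S(M_x)` and `S(M_x)` is the generic
radical layering of the modules with socle layering `S*(M_x)`. -/
theorem statement_15 (K : Type) [Field K] [IsAlgClosed K]
    (Q : QuiverData) (L : ℕ) (hL : 0 < L) (hacyc : Acyclic Q)
    (d : Fin Q.n → ℕ) (S Sstar : Fin (L+1) → Fin Q.n → ℕ) (hS : hasDimVec S d)
    (hgen : GenSoc Q d K L
      {x | x ∈ TruncRepVar Q d K L ∧ radLayering Q d K L x = S} Sstar) :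
    ((closure {x : TruncV Q d K L | radLayering Q d K L x.1 = S}
        ∈ irreducibleComponents (TruncV Q d K L))
      ↔ ∀ (S' Sstar' : Fin (L+1) → Fin Q.n → ℕ), hasDimVec S' d →
          GenSoc Q d K L
            {x | x ∈ TruncRepVar Q d K L ∧ radLayering Q d K L x = S'} Sstar' →
          dominates S' S → dominates Sstar' Sstar → (S' = S ∧ Sstar' = Sstar)) ∧
    ∀ x : TruncV Q d K L,
      (∀ y : TruncV Q d K L,
        dominates (radLayering Q d K L y.1) (radLayering Q d K L x.1) →
        dominates (socLayering Q d K L y.1) (socLayering Q d K L x.1) →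
        (radLayering Q d K L y.1 = radLayering Q d K L x.1 ∧
          socLayering Q d K L y.1 = socLayering Q d K L x.1)) →
      (GenSoc Q d K L
          {z | z ∈ TruncRepVar Q d K L ∧
            radLayering Q d K L z = radLayering Q d K L x.1}
          (socLayering Q d K L x.1) ∧
        ∀ z ∈ TruncRepVar Q d K L,
          socLayering Q d K L z = socLayering Q d K L x.1 →
          dominates (radLayering Q d K L x.1) (radLayering Q d K L z)) := by
  have : Infinite K := IsAlgClosed.instInfinite
  exact statement_15_general K Q L hacyc d S Sstar hgen
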